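/- arXiv:1806.08855 — 5 statements merged into one kernel-verified Lean document; each statement's English description precedes it below -/
import Mathlib

section
/- Suppose m, l, t are positive integers with m ≥ tl and t ≥ 2. Let G be a family of l-element subsets of [m] and α := |G|/C(m,l). Let B = (B_1,…,B_t) be a uniformly random ordered tuple of t pairwise disjoint l-element subsets of [m], and for i ∈ [t] let η_i be the indicator of the event that B_i ∈ G. Then for any i ≠ j in [t], |Cov(η_i, η_j)| ≤ α(1−α)/(t−1). -/
open Finset

/-- The set of ordered tuples of `t` pairwise disjoint `l`-element subsets of
`{0,…,m-1}` (ordered `t`-matchings of `l`-sets). -/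
noncomputable def tupleSpace (m l t : ℕ) : Finset (Fin t → Finset ℕ) :=
  (Fintype.piFinset fun _ : Fin t => (Finset.range m).powersetCard l).filter
    fun B => ∀ i j : Fin t, i ≠ j → Disjoint (B i) (B j)

/-- `hits G B` is the number of indices `i` with `B i ∈ G`. -/
noncomputable def hits (G : Finset (Finset ℕ)) {t : ℕ} (B : Fin t → Finset ℕ) : ℕ :=
  (Finset.univ.filter fun i : Fin t => B i ∈ G).card

/-- The indicator (as a real number) of the event that the `i`-th set of the
tuple `B` belongs to `G`. -/
noncomputable def indG (G : Finset (Finset ℕ)) {t : ℕ} (i : Fin t)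
    (B : Fin t → Finset ℕ) : ℝ :=
  if B i ∈ G then 1 else 0

/-!
Permuting `V` shows that `(B i, B j)` is a uniform ordered pair of disjoint `l`-subsets of `V`.
Hence, for `f` of mean zero, the covariance of `f (B i)` and `f (B j)` is the mean of
`f A * g (V \ A)`, where `g S` is the mean of `f` over the `l`-subsets of `S`, and by
Cauchy-Schwarz it suffices to bound the mean of `g ^ 2` over the `(#V - l)`-sets.

Let `U` and `D` be the up and down operators between the levels of the Boolean lattice of subsets
of `V`. They are adjoint and `D U - U D` is multiplication by `#V - 2 k` on functions on `k`-sets,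
so induction on `k` gives `‖U h‖ ^ 2 ≤ k (#V - k - 1) ‖h‖ ^ 2` for `h` of mean zero. Up to a scalar,
`U` maps `g` on `n`-sets to `g` on `(n + 1)`-sets. Telescoping from `n = l` to `n = #V - l`, the
mean square of `g` drops to at most `(l / (#V - l)) ^ 2` times the variance of `f`, and
`l / (#V - l) ≤ 1 / (t - 1)`.
-/

open scoped BigOperators

variable {β : Type*}

section UpDown

variable [DecidableEq β] {R : Type*}

/-- The up operator of the Boolean lattice: it turns a function on `k`-sets into one on
`(k + 1)`-sets by summing over the `k`-subsets. -/
def upSum [AddCommMonoid R] (f : Finset β → R) (S : Finset β) : R :=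
  ∑ x ∈ S, f (S.erase x)

/-- The down operator of the Boolean lattice on `V`, adjoint to `upSum`: it turns a function on
`(k + 1)`-sets into one on `k`-sets by summing over the `(k + 1)`-supersets inside `V`. -/
def downSum [AddCommMonoid R] (V : Finset β) (f : Finset β → R) (T : Finset β) : R :=
  ∑ x ∈ V \ T, f (insert x T)

variable {V : Finset β}

lemma sum_powersetCard_succ_sum_mem [AddCommMonoid R] (k : ℕ) (φ : Finset β → β → R) :
    ∑ S ∈ V.powersetCard (k + 1), ∑ x ∈ S, φ S x =
      ∑ T ∈ V.powersetCard k, ∑ x ∈ V \ T, φ (insert x T) x := by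
  rw [sum_sigma', sum_sigma']
  refine sum_bij' (fun p _ ↦ ⟨p.1.erase p.2, p.2⟩) (fun p _ ↦ ⟨insert p.2 p.1, p.2⟩)
    ?_ ?_ ?_ ?_ ?_ <;> rintro ⟨S, x⟩ h <;>
    simp only [mem_sigma, mem_powersetCard, mem_sdiff] at h ⊢
  · obtain ⟨⟨hSV, hS⟩, hx⟩ := h
    exact ⟨⟨(erase_subset _ _).trans hSV, by rw [card_erase_of_mem hx, hS, Nat.add_sub_cancel]⟩,
      hSV hx, notMem_erase _ _⟩
  · obtain ⟨⟨hSV, hS⟩, hxV, hx⟩ := h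
    exact ⟨⟨insert_subset hxV hSV, by rw [card_insert_of_notMem hx, hS]⟩, mem_insert_self _ _⟩
  · rw [insert_erase h.2]
  · rw [erase_insert h.2.2]
  · rw [insert_erase h.2]

lemma sum_mul_upSum [NonUnitalNonAssocSemiring R] (k : ℕ) (f g : Finset β → R) :
    ∑ S ∈ V.powersetCard (k + 1), g S * upSum f S =
      ∑ T ∈ V.powersetCard k, downSum V g T * f T := by
  simp only [upSum, downSum, mul_sum, sum_mul]
  rw [sum_powersetCard_succ_sum_mem k fun S x ↦ g S * f (S.erase x)]
  refine sum_congr rfl fun T _ ↦ sum_congr rfl fun x hx ↦ ?_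
  rw [erase_insert (mem_sdiff.1 hx).2]

lemma sum_upSum [CommRing R] (k : ℕ) (f : Finset β → R) :
    ∑ S ∈ V.powersetCard (k + 1), upSum f S = (#V - k) * ∑ T ∈ V.powersetCard k, f T := by
  have adjoint := sum_mul_upSum (V := V) k f 1
  simp only [Pi.one_apply, one_mul] at adjoint
  rw [adjoint, mul_sum]
  refine sum_congr rfl fun T hT ↦ ?_
  obtain ⟨hTV, hT⟩ := mem_powersetCard.1 hT
  simp only [downSum, Pi.one_apply, sum_const, nsmul_one]
  rw [card_sdiff_of_subset hTV, Nat.cast_sub (card_le_card hTV), hT]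

lemma sum_downSum [CommSemiring R] (k : ℕ) (f : Finset β → R) :
    ∑ T ∈ V.powersetCard k, downSum V f T = (k + 1) * ∑ S ∈ V.powersetCard (k + 1), f S := by
  have adjoint := sum_mul_upSum (V := V) k 1 f
  simp only [Pi.one_apply, mul_one] at adjoint
  rw [← adjoint, mul_sum]
  refine sum_congr rfl fun S hS ↦ ?_
  simp [upSum, (mem_powersetCard.1 hS).2, mul_comm]

lemma downSum_upSum [CommSemiring R] (f : Finset β → R) (A : Finset β) :
    downSum V (upSum f) A =
      #(V \ A) * f A + ∑ x ∈ V \ A, ∑ y ∈ A, f ((insert x A).erase y) := by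
  simp only [downSum, upSum]
  rw [← nsmul_eq_mul, ← sum_const, ← sum_add_distrib]
  refine sum_congr rfl fun x hx ↦ ?_
  have hxA : x ∉ A := (mem_sdiff.1 hx).2
  rw [sum_insert hxA, erase_insert hxA]

lemma upSum_downSum [CommSemiring R] (f : Finset β → R) {A : Finset β} (hA : A ⊆ V) :
    upSum (downSum V f) A =
      #A * f A + ∑ y ∈ A, ∑ x ∈ V \ A, f ((insert x A).erase y) := by
  simp only [downSum, upSum]
  rw [← nsmul_eq_mul, ← sum_const, ← sum_add_distrib]
  refine sum_congr rfl fun y hy ↦ ?_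
  rw [sdiff_erase (hA hy), sum_insert (by simp [hy]), insert_erase hy]
  congr 1
  refine sum_congr rfl fun x hx ↦ ?_
  have hxy : x ≠ y := fun h ↦ (mem_sdiff.1 hx).2 (h ▸ hy)
  rw [erase_insert_of_ne hxy]

lemma downSum_upSum_sub_upSum_downSum [CommRing R] (f : Finset β → R) {A : Finset β}
    (hA : A ⊆ V) :
    downSum V (upSum f) A - upSum (downSum V f) A = (#V - 2 * #A) * f A := by
  rw [downSum_upSum, upSum_downSum f hA, sum_comm, card_sdiff_of_subset hA,
    Nat.cast_sub (card_le_card hA)]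
  ring

lemma sum_sq_upSum [CommRing R] (k : ℕ) (f : Finset β → R) :
    ∑ S ∈ V.powersetCard (k + 2), upSum f S ^ 2 =
      ∑ T ∈ V.powersetCard k, downSum V f T ^ 2 +
        (#V - 2 * (k + 1)) * ∑ A ∈ V.powersetCard (k + 1), f A ^ 2 := by
  simp only [pow_two]
  rw [sum_mul_upSum (k + 1) f (upSum f), ← sum_mul_upSum k (downSum V f) f, mul_sum,
    ← sum_add_distrib]
  refine sum_congr rfl fun A hA ↦ ?_
  obtain ⟨hAV, hA⟩ := mem_powersetCard.1 hA
  have commutator := downSum_upSum_sub_upSum_downSum f hAV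
  rw [hA] at commutator
  push_cast at commutator
  linear_combination f A * commutator

variable [CommRing R] [LinearOrder R] [IsStrictOrderedRing R]

lemma sum_sq_downSum_le {k : ℕ} {f : Finset β → R} {c : R} (hc : 0 ≤ c)
    (h : ∑ S ∈ V.powersetCard (k + 1), upSum (downSum V f) S ^ 2 ≤
      c * ∑ T ∈ V.powersetCard k, downSum V f T ^ 2) :
    ∑ T ∈ V.powersetCard k, downSum V f T ^ 2 ≤ c * ∑ S ∈ V.powersetCard (k + 1), f S ^ 2 := by
  have cauchy_schwarz :=
    sum_mul_sq_le_sq_mul_sq (V.powersetCard (k + 1)) f (upSum (downSum V f))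
  rw [sum_mul_upSum k (downSum V f) f] at cauchy_schwarz
  simp only [← pow_two (downSum V f _)] at cauchy_schwarz
  set p := ∑ T ∈ V.powersetCard k, downSum V f T ^ 2
  set q := ∑ S ∈ V.powersetCard (k + 1), f S ^ 2
  have hp : 0 ≤ p := sum_nonneg fun _ _ ↦ sq_nonneg _
  have hq : 0 ≤ q := sum_nonneg fun _ _ ↦ sq_nonneg _
  rcases hp.eq_or_lt with hp | hp
  · rw [← hp]
    positivity
  · refine le_of_mul_le_mul_right ?_ hp
    calc p * p = p ^ 2 := (pow_two p).symm
      _ ≤ q * (c * p) := cauchy_schwarz.trans (mul_le_mul_of_nonneg_left h hq)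
      _ = c * q * p := by ring

lemma sum_sq_upSum_le {k : ℕ} (hk : k + 1 ≤ #V) {f : Finset β → R}
    (hf : ∑ A ∈ V.powersetCard k, f A = 0) :
    ∑ S ∈ V.powersetCard (k + 1), upSum f S ^ 2 ≤
      k * (#V - k - 1) * ∑ A ∈ V.powersetCard k, f A ^ 2 := by
  induction k generalizing f with
  | zero =>
    have hf_empty : f ∅ = 0 := by simpa only [powersetCard_zero, sum_singleton] using hf
    simp [powersetCard_one, upSum, hf_empty]
  | succ k ih =>
    have hkV : (k : R) + 1 + 1 ≤ #V := mod_cast hk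
    have hc : 0 ≤ (k : R) * (#V - k - 1) := mul_nonneg k.cast_nonneg (by linarith)
    have hdown : ∑ T ∈ V.powersetCard k, downSum V f T = 0 := by rw [sum_downSum, hf, mul_zero]
    have down_bound := sum_sq_downSum_le hc (ih (by omega) hdown)
    rw [sum_sq_upSum]
    push_cast
    linarith

end UpDown

section SubsetMean

variable {V : Finset β}

lemma card_powersetCard_succ_mul {R : Type*} [CommRing R] {n : ℕ} (hn : n ≤ #V) :
    (#(V.powersetCard (n + 1)) : R) * (n + 1) = #(V.powersetCard n) * (#V - n) := by
  rw [card_powersetCard, card_powersetCard, ← Nat.cast_sub hn]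
  exact mod_cast congrArg (Nat.cast (R := R)) (Nat.choose_succ_right_eq #V n)

lemma card_powersetCard_erase_mul [DecidableEq β] {R : Type*} [CommRing R] {l : ℕ} {x : β}
    (hx : x ∈ V) (hl : l ≤ #V) :
    (#((V.erase x).powersetCard l) : R) * #V = #(V.powersetCard l) * (#V - l) := by
  rw [card_powersetCard, card_powersetCard, ← Nat.cast_sub hl, ← card_erase_add_one hx]
  exact mod_cast congrArg (Nat.cast (R := R)) (Nat.choose_mul_succ_eq #(V.erase x) l)

lemma card_powersetCard_cast_pos {R : Type*} [Semiring R] [PartialOrder R]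
    [IsStrictOrderedRing R] {l : ℕ} (hl : l ≤ #V) : (0 : R) < #(V.powersetCard l) :=
  Nat.cast_pos.2 (powersetCard_nonempty.2 hl).card_pos

lemma card_powersetCard_cast_ne_zero {R : Type*} [Semiring R] [CharZero R] {l : ℕ}
    (hl : l ≤ #V) : (#(V.powersetCard l) : R) ≠ 0 :=
  Nat.cast_ne_zero.2 (powersetCard_nonempty.2 hl).card_ne_zero

lemma sum_sum_powersetCard_erase [DecidableEq β] {R : Type*} [CommRing R] (l : ℕ)
    (f : Finset β → R) (S : Finset β) :
    ∑ x ∈ S, ∑ A ∈ (S.erase x).powersetCard l, f A =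
      (#S - l) * ∑ A ∈ S.powersetCard l, f A := by
  have hcomm : ∑ x ∈ S, ∑ A ∈ (S.erase x).powersetCard l, f A =
      ∑ A ∈ S.powersetCard l, ∑ _x ∈ S \ A, f A := by
    refine sum_comm' fun x A ↦ ?_
    simp only [mem_powersetCard, subset_erase, mem_sdiff]
    tauto
  rw [hcomm, mul_sum]
  refine sum_congr rfl fun A hA ↦ ?_
  obtain ⟨hAS, hA⟩ := mem_powersetCard.1 hA
  rw [sum_const, nsmul_eq_mul, card_sdiff_of_subset hAS, Nat.cast_sub (card_le_card hAS), hA]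

lemma expect_powersetCard_sdiff [DecidableEq β] {M : Type*} [AddCommMonoid M] [Module ℚ≥0 M]
    {l : ℕ} (hl : l ≤ #V) (F : Finset β → M) :
    𝔼 A ∈ V.powersetCard l, F (V \ A) = 𝔼 S ∈ V.powersetCard (#V - l), F S := by
  refine expect_nbij' (V \ ·) (V \ ·) ?_ ?_ ?_ ?_ fun _ _ ↦ rfl <;> intro A hA <;>
    obtain ⟨hAV, hA⟩ := mem_powersetCard.1 hA
  · exact mem_powersetCard.2 ⟨sdiff_subset, by rw [card_sdiff_of_subset hAV, hA]⟩
  · exact mem_powersetCard.2 ⟨sdiff_subset, by rw [card_sdiff_of_subset hAV]; omega⟩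
  · exact Finset.sdiff_sdiff_eq_self hAV
  · exact Finset.sdiff_sdiff_eq_self hAV

/-- The mean of `f` over the `l`-subsets of `S`. -/
def subsetMean {M : Type*} [AddCommMonoid M] [Module ℚ≥0 M] (l : ℕ) (f : Finset β → M)
    (S : Finset β) : M :=
  𝔼 A ∈ S.powersetCard l, f A

lemma subsetMean_card {M : Type*} [AddCommMonoid M] [Module ℚ≥0 M] (f : Finset β → M)
    (S : Finset β) : subsetMean #S f S = f S := by
  rw [subsetMean, powersetCard_self, expect_singleton]

section CharZero

variable {𝕜 : Type*} [Field 𝕜] [CharZero 𝕜]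

lemma upSum_subsetMean [DecidableEq β] {l : ℕ} (f : Finset β → 𝕜) {S : Finset β} (hS : l < #S) :
    upSum (subsetMean l f) S = #S * subsetMean l f S := by
  have hSl : (#S : 𝕜) - l ≠ 0 := sub_ne_zero.2 (mod_cast hS.ne')
  have hS0 : (#S : 𝕜) ≠ 0 := mod_cast (l.zero_le.trans_lt hS).ne'
  have hchoose : (#(S.powersetCard l) : 𝕜) ≠ 0 := card_powersetCard_cast_ne_zero hS.le
  have hmean : ∀ x ∈ S, subsetMean l f (S.erase x) =
      (∑ A ∈ (S.erase x).powersetCard l, f A) * (#S / (#(S.powersetCard l) * (#S - l))) := by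
    intro x hx
    rw [subsetMean, expect_eq_sum_div_card, ← card_powersetCard_erase_mul hx hS.le,
      div_mul_cancel_right₀ hS0, div_eq_mul_inv]
  rw [upSum, sum_congr rfl hmean, ← sum_mul, sum_sum_powersetCard_erase, subsetMean,
    expect_eq_sum_div_card]
  field_simp

lemma upSum_subsetMean_of_mem [DecidableEq β] {l n : ℕ} (hln : l ≤ n) (f : Finset β → 𝕜)
    {S : Finset β} (hS : S ∈ V.powersetCard (n + 1)) :
    upSum (subsetMean l f) S = (n + 1) * subsetMean l f S := by
  have hS := (mem_powersetCard.1 hS).2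
  rw [upSum_subsetMean f (by omega), hS, Nat.cast_add_one]

lemma expect_upSum [DecidableEq β] {n : ℕ} (hn : n < #V) (f : Finset β → 𝕜) :
    𝔼 S ∈ V.powersetCard (n + 1), upSum f S = (n + 1) * 𝔼 A ∈ V.powersetCard n, f A := by
  have hcard := card_powersetCard_succ_mul (R := 𝕜) hn.le
  have hsucc : (#(V.powersetCard (n + 1)) : 𝕜) ≠ 0 := card_powersetCard_cast_ne_zero hn
  have hself : (#(V.powersetCard n) : 𝕜) ≠ 0 := card_powersetCard_cast_ne_zero hn.le
  rw [expect_eq_sum_div_card, expect_eq_sum_div_card, sum_upSum]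
  field_simp
  linear_combination -(∑ A ∈ V.powersetCard n, f A) * hcard

lemma expect_subsetMean {l n : ℕ} (hln : l ≤ n) (hn : n ≤ #V) (f : Finset β → 𝕜) :
    𝔼 S ∈ V.powersetCard n, subsetMean l f S = 𝔼 A ∈ V.powersetCard l, f A := by
  classical
  induction n, hln using Nat.le_induction with
  | base =>
    refine expect_congr rfl fun A hA ↦ ?_
    rw [← (mem_powersetCard.1 hA).2, subsetMean_card]
  | succ n hln ih =>
    have hn0 : (n : 𝕜) + 1 ≠ 0 := n.cast_add_one_ne_zero
    rw [← ih (by omega), ← mul_right_inj' hn0, ← expect_upSum hn, mul_expect]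
    exact expect_congr rfl fun S hS ↦ (upSum_subsetMean_of_mem hln f hS).symm

end CharZero

variable {𝕜 : Type*} [Field 𝕜] [LinearOrder 𝕜] [IsStrictOrderedRing 𝕜]

lemma expect_sq_subsetMean_succ_le {l n : ℕ} (hln : l ≤ n) (hn : n < #V) {f : Finset β → 𝕜}
    (hf : 𝔼 A ∈ V.powersetCard l, f A = 0) :
    (n + 1) * (#V - n) * 𝔼 S ∈ V.powersetCard (n + 1), subsetMean l f S ^ 2 ≤
      n * (#V - n - 1) * 𝔼 S ∈ V.powersetCard n, subsetMean l f S ^ 2 := by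
  classical
  have hmean : ∑ S ∈ V.powersetCard n, subsetMean l f S = 0 := by
    rw [← card_mul_expect, expect_subsetMean hln hn.le, hf, mul_zero]
  have hup := sum_sq_upSum_le hn hmean
  rw [sum_congr rfl fun S hS ↦ by rw [upSum_subsetMean_of_mem hln f hS, mul_pow],
    ← mul_sum, ← card_mul_expect, ← card_mul_expect] at hup
  have hcard := card_powersetCard_succ_mul (R := 𝕜) hn.le
  refine le_of_mul_le_mul_left ?_ (card_powersetCard_cast_pos (R := 𝕜) hn.le)
  linear_combination hup - (n + 1) * (𝔼 S ∈ V.powersetCard (n + 1), subsetMean l f S ^ 2) * hcard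

lemma expect_sq_subsetMean_le {l n : ℕ} (hln : l ≤ n) (hn : n ≤ #V) {f : Finset β → 𝕜}
    (hf : 𝔼 A ∈ V.powersetCard l, f A = 0) :
    n * (#V - l) * 𝔼 S ∈ V.powersetCard n, subsetMean l f S ^ 2 ≤
      l * (#V - n) * 𝔼 A ∈ V.powersetCard l, f A ^ 2 := by
  induction n, hln using Nat.le_induction with
  | base =>
    refine (congrArg _ (expect_congr rfl fun A hA ↦ ?_)).le
    rw [← (mem_powersetCard.1 hA).2, subsetMean_card]
  | succ n hln ih =>
    have hnV : (n : 𝕜) + 1 ≤ #V := mod_cast hn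
    have hlV : (0 : 𝕜) ≤ #V - l := sub_nonneg.2 (mod_cast hln.trans (Nat.le_of_succ_le hn))
    have hn1 : (0 : 𝕜) ≤ #V - n - 1 := by linarith
    have hstep := mul_le_mul_of_nonneg_left (expect_sq_subsetMean_succ_le hln hn hf) hlV
    have hprev := mul_le_mul_of_nonneg_left (ih (Nat.le_of_succ_le hn)) hn1
    refine le_of_mul_le_mul_left ?_ (show (0 : 𝕜) < #V - n by linarith)
    push_cast
    linear_combination hstep + hprev

lemma abs_expect_mul_subsetMean_sdiff_le [DecidableEq β] {l : ℕ} (hl : 2 * l ≤ #V)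
    {f : Finset β → 𝕜} (hf : 𝔼 A ∈ V.powersetCard l, f A = 0) :
    (#V - l) * |𝔼 A ∈ V.powersetCard l, f A * subsetMean l f (V \ A)| ≤
      l * 𝔼 A ∈ V.powersetCard l, f A ^ 2 := by
  have hlV : (0 : 𝕜) ≤ #V - l := sub_nonneg.2 (by exact_mod_cast (by omega : l ≤ #V))
  have cauchy_schwarz :=
    expect_mul_sq_le_sq_mul_sq (V.powersetCard l) f fun A ↦ subsetMean l f (V \ A)
  have hmean := expect_sq_subsetMean_le (n := #V - l) (by omega) (by omega) hf
  rw [expect_powersetCard_sdiff (by omega) fun S ↦ subsetMean l f S ^ 2] at cauchy_schwarz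
  rw [Nat.cast_sub (by omega), sub_sub_cancel] at hmean
  have hvar : 0 ≤ 𝔼 A ∈ V.powersetCard l, f A ^ 2 := expect_nonneg fun _ _ ↦ sq_nonneg _
  rw [← abs_of_nonneg hlV, ← abs_mul]
  refine abs_le_of_sq_le_sq ?_ (mul_nonneg l.cast_nonneg hvar)
  rw [mul_pow]
  linear_combination (#V - l : 𝕜) ^ 2 * cauchy_schwarz +
    (𝔼 A ∈ V.powersetCard l, f A ^ 2) * hmean

end SubsetMean

section Expect

variable {ι κ 𝕜 : Type*} [Field 𝕜] [CharZero 𝕜]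

lemma expect_comp_of_card_fiber_eq [DecidableEq κ] {s : Finset ι} {t : Finset κ}
    (hs : s.Nonempty) {π : ι → κ} (hπ : ∀ a ∈ s, π a ∈ t) {n : ℕ}
    (hn : ∀ b ∈ t, #{a ∈ s | π a = b} = n) (g : κ → 𝕜) :
    𝔼 a ∈ s, g (π a) = 𝔼 b ∈ t, g b := by
  have hsum : ∑ a ∈ s, g (π a) = n * ∑ b ∈ t, g b := by
    rw [← sum_fiberwise_of_maps_to' hπ, mul_sum]
    exact sum_congr rfl fun b hb ↦ by rw [sum_const, hn b hb, nsmul_eq_mul]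
  have hcard : #s = n * #t := by
    rw [card_eq_sum_card_fiberwise hπ, sum_congr rfl hn, sum_const, smul_eq_mul, mul_comm]
  have hn0 : (n : 𝕜) ≠ 0 := by
    rw [Nat.cast_ne_zero]
    rintro rfl
    exact hs.card_pos.ne' (by rw [hcard, zero_mul])
  rw [expect_eq_sum_div_card, expect_eq_sum_div_card, hsum, hcard, Nat.cast_mul,
    mul_div_mul_left _ _ hn0]

lemma expect_comp_of_transitive {s : Finset ι} {t : Finset κ} (hs : s.Nonempty) {π : ι → κ}
    (hπ : ∀ a ∈ s, π a ∈ t)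
    (htrans : ∀ b ∈ t, ∀ b' ∈ t, ∃ φ : ι → ι, φ.Injective ∧ (∀ a ∈ s, φ a ∈ s) ∧
      ∀ a, π a = b → π (φ a) = b') (g : κ → 𝕜) :
    𝔼 a ∈ s, g (π a) = 𝔼 b ∈ t, g b := by
  classical
  have fiber_le : ∀ b ∈ t, ∀ b' ∈ t, #{a ∈ s | π a = b} ≤ #{a ∈ s | π a = b'} := by
    intro b hb b' hb'
    obtain ⟨φ, φ_inj, φ_mem, hφ⟩ := htrans b hb b' hb'
    refine card_le_card_of_injOn φ (fun a ha ↦ ?_) φ_inj.injOn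
    obtain ⟨ha, hab⟩ := mem_filter.1 ha
    exact mem_filter.2 ⟨φ_mem a ha, hφ a hab⟩
  obtain ⟨a₀, ha₀⟩ := hs
  exact expect_comp_of_card_fiber_eq ⟨a₀, ha₀⟩ hπ
    (fun b hb ↦ (fiber_le b hb _ (hπ a₀ ha₀)).antisymm (fiber_le _ (hπ a₀ ha₀) b hb)) g

lemma expect_sigma_of_card_eq {α : ι → Type*} {s : Finset ι} {t : ∀ a, Finset (α a)} {n : ℕ}
    (hn : ∀ a ∈ s, #(t a) = n) (g : (Σ a, α a) → 𝕜) :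
    𝔼 p ∈ s.sigma t, g p = 𝔼 a ∈ s, 𝔼 b ∈ t a, g ⟨a, b⟩ := by
  rw [expect_eq_sum_div_card, card_sigma, sum_congr rfl hn, sum_const, smul_eq_mul, sum_sigma,
    expect_eq_sum_div_card, Nat.cast_mul, mul_comm, ← div_div, sum_div]
  congr 1
  exact sum_congr rfl fun a ha ↦ by rw [expect_eq_sum_div_card, hn a ha]

lemma expect_ite_mem_sub_sq [DecidableEq ι] {s t : Finset ι} (hts : t ⊆ s) {α : 𝕜}
    (hα : α = #t / #s) :
    𝔼 a ∈ s, ((if a ∈ t then 1 else 0) - α) ^ 2 = α * (1 - α) := by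
  rcases s.eq_empty_or_nonempty with rfl | hs
  · simp [hα]
  have hmean : 𝔼 a ∈ s, (if a ∈ t then 1 else 0 : 𝕜) = α := by
    rw [expect_eq_sum_div_card, sum_boole, filter_mem_eq_inter, inter_eq_right.2 hts, hα]
  calc 𝔼 a ∈ s, ((if a ∈ t then 1 else 0) - α) ^ 2
      = 𝔼 a ∈ s, ((1 - 2 * α) * (if a ∈ t then 1 else 0) + α ^ 2) :=
        expect_congr rfl fun a _ ↦ by split_ifs <;> ring
    _ = α * (1 - α) := by
        rw [expect_add_distrib, ← mul_expect, hmean, expect_const hs]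
        ring

end Expect

section Permutations

variable {V : Finset β}

lemma exists_perm_map_eq {A A' : Finset β} (hA : A ⊆ V) (hA' : A' ⊆ V) (h : #A = #A') :
    ∃ σ : Equiv.Perm β, {x | σ x ≠ x} ⊆ (V : Set β) ∧ A.map σ.toEmbedding = A' := by
  classical
  have hcard : #(A.subtype (· ∈ V)) = #(A'.subtype (· ∈ V)) := by
    rw [card_subtype, card_subtype, filter_true_of_mem fun _ hx ↦ hA hx,
      filter_true_of_mem fun _ hx ↦ hA' hx, h]
  obtain ⟨τ, hτ⟩ := Equiv.Perm.exists_map_finset_eq _ _ hcard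
  refine ⟨Equiv.Perm.ofSubtype τ, fun x hx ↦ ?_, ?_⟩
  · by_contra hxV
    exact hx (Equiv.Perm.ofSubtype_apply_of_not_mem τ hxV)
  · calc A.map (Equiv.Perm.ofSubtype τ).toEmbedding
        = ((A.subtype (· ∈ V)).map (.subtype _)).map (Equiv.Perm.ofSubtype τ).toEmbedding := by
          rw [subtype_map_of_mem fun _ hx ↦ hA hx]
      _ = ((A.subtype (· ∈ V)).map τ.toEmbedding).map (.subtype _) := by
          rw [map_map, map_map]
          congr 1
          ext x
          exact Equiv.Perm.ofSubtype_apply_coe τ x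
      _ = A' := by rw [hτ, subtype_map_of_mem fun _ hx ↦ hA' hx]

lemma exists_perm_map_eq_map_eq [DecidableEq β] {A C A' C' : Finset β} (hA : A ⊆ V)
    (hC : C ⊆ V \ A) (hA' : A' ⊆ V) (hC' : C' ⊆ V \ A') (hAA' : #A = #A') (hCC' : #C = #C') :
    ∃ σ : Equiv.Perm β, V.map σ.toEmbedding = V ∧ A.map σ.toEmbedding = A' ∧
      C.map σ.toEmbedding = C' := by
  obtain ⟨σ, hσV, hσA⟩ := exists_perm_map_eq hA hA' hAA'
  have hσC : C.map σ.toEmbedding ⊆ V \ A' := by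
    rw [← hσA, ← map_perm hσV, ← Finset.map_sdiff]
    exact map_subset_map.2 hC
  obtain ⟨τ, hτ, hτC⟩ := exists_perm_map_eq hσC hC' (by rw [card_map, hCC'])
  have hτV : V.map τ.toEmbedding = V := map_perm (hτ.trans (coe_subset.2 sdiff_subset))
  have hτA' : A'.map τ.toEmbedding = A' := by
    have fixed : ∀ x ∈ A', τ x = x := fun x hx ↦
      by_contra fun hne ↦ (mem_sdiff.1 (hτ hne)).2 hx
    rw [map_eq_image]
    exact (image_congr (f := τ) (g := id) fixed).trans image_id
  refine ⟨σ.trans τ, ?_, ?_, ?_⟩ <;> rw [Equiv.trans_toEmbedding, ← map_map]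
  · exact (congrArg _ (map_perm hσV)).trans hτV
  · rw [hσA, hτA']
  · exact hτC

lemma injective_comp_map {ι : Type*} (σ : Equiv.Perm β) :
    (fun (B : ι → Finset β) i ↦ (B i).map σ.toEmbedding).Injective :=
  (map_injective σ.toEmbedding).comp_left

end Permutations

section Matchings

/-- The families `B : ι → Finset β` of pairwise disjoint `l`-subsets of `V`, i.e. the
`l`-uniform matchings in `V` labelled by `ι`. -/
def matchings (ι : Type*) [Fintype ι] [DecidableEq ι] [DecidableEq β] (V : Finset β) (l : ℕ) :
    Finset (ι → Finset β) :=
  {B ∈ Fintype.piFinset fun _ : ι ↦ V.powersetCard l | ∀ i j, i ≠ j → Disjoint (B i) (B j)}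

variable {ι : Type*} [Fintype ι] [DecidableEq ι] [DecidableEq β] {V : Finset β} {l : ℕ}

lemma mem_matchings {B : ι → Finset β} :
    B ∈ matchings ι V l ↔
      (∀ i, B i ∈ V.powersetCard l) ∧ ∀ i j, i ≠ j → Disjoint (B i) (B j) := by
  rw [matchings, mem_filter, Fintype.mem_piFinset]

lemma map_mem_matchings {σ : Equiv.Perm β} (hσ : V.map σ.toEmbedding = V) {B : ι → Finset β}
    (hB : B ∈ matchings ι V l) : (fun i ↦ (B i).map σ.toEmbedding) ∈ matchings ι V l := by
  obtain ⟨hBV, hdisj⟩ := mem_matchings.1 hB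
  refine mem_matchings.2 ⟨fun i ↦ ?_, fun i j hij ↦ (disjoint_map _).2 (hdisj i j hij)⟩
  obtain ⟨hBi, hcard⟩ := mem_powersetCard.1 (hBV i)
  refine mem_powersetCard.2 ⟨?_, by rw [card_map, hcard]⟩
  rw [← hσ]
  exact map_subset_map.2 hBi

section Marginals

variable {𝕜 : Type*} [Field 𝕜] [CharZero 𝕜]

lemma expect_matchings_apply (hne : (matchings ι V l).Nonempty) (i : ι) (f : Finset β → 𝕜) :
    𝔼 B ∈ matchings ι V l, f (B i) = 𝔼 A ∈ V.powersetCard l, f A := by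
  refine expect_comp_of_transitive (π := fun B : ι → Finset β ↦ B i) hne
    (fun B hB ↦ (mem_matchings.1 hB).1 i) (fun A hA A' hA' ↦ ?_) f
  obtain ⟨hA, hAl⟩ := mem_powersetCard.1 hA
  obtain ⟨hA', hAl'⟩ := mem_powersetCard.1 hA'
  obtain ⟨σ, hσV, hσ⟩ := exists_perm_map_eq hA hA' (hAl.trans hAl'.symm)
  exact ⟨_, injective_comp_map σ, fun B hB ↦ map_mem_matchings (map_perm hσV) hB,
    fun B hBi ↦ by rw [hBi, hσ]⟩

lemma expect_matchings_apply_apply (hne : (matchings ι V l).Nonempty) {i j : ι} (hij : i ≠ j)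
    (g : Finset β → Finset β → 𝕜) :
    𝔼 B ∈ matchings ι V l, g (B i) (B j) =
      𝔼 A ∈ V.powersetCard l, 𝔼 C ∈ (V \ A).powersetCard l, g A C := by
  have hcard : ∀ A ∈ V.powersetCard l, #((V \ A).powersetCard l) = (#V - l).choose l := by
    intro A hA
    obtain ⟨hAV, hA⟩ := mem_powersetCard.1 hA
    rw [card_powersetCard, card_sdiff_of_subset hAV, hA]
  rw [← expect_sigma_of_card_eq hcard fun p ↦ g p.1 p.2]
  refine expect_comp_of_transitive
    (π := fun B : ι → Finset β ↦ (⟨B i, B j⟩ : Σ _ : Finset β, Finset β)) hne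
    (fun B hB ↦ ?_) ?_ fun p ↦ g p.1 p.2
  · obtain ⟨hBV, hdisj⟩ := mem_matchings.1 hB
    obtain ⟨hBj, hBjl⟩ := mem_powersetCard.1 (hBV j)
    exact mem_sigma.2
      ⟨hBV i, mem_powersetCard.2 ⟨subset_sdiff.2 ⟨hBj, hdisj j i hij.symm⟩, hBjl⟩⟩
  · rintro ⟨A, C⟩ hAC ⟨A', C'⟩ hAC'
    simp only [mem_sigma, mem_powersetCard] at hAC hAC'
    obtain ⟨⟨hA, hAl⟩, hC, hCl⟩ := hAC
    obtain ⟨⟨hA', hAl'⟩, hC', hCl'⟩ := hAC'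
    obtain ⟨σ, hσV, hσA, hσC⟩ := exists_perm_map_eq_map_eq hA hC hA' hC'
      (hAl.trans hAl'.symm) (hCl.trans hCl'.symm)
    refine ⟨_, injective_comp_map σ, fun B hB ↦ map_mem_matchings hσV hB, fun B hB ↦ ?_⟩
    obtain ⟨rfl, rfl⟩ : B i = A ∧ B j = C := by simpa using hB
    rw [hσA, hσC]

lemma covariance_matchings_eq (hne : (matchings ι V l).Nonempty) {i j : ι} (hij : i ≠ j)
    {f : Finset β → 𝕜} {μ : 𝕜} (hμ : μ = 𝔼 A ∈ V.powersetCard l, f A) :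
    (𝔼 B ∈ matchings ι V l, f (B i) * f (B j)) -
        (𝔼 B ∈ matchings ι V l, f (B i)) * 𝔼 B ∈ matchings ι V l, f (B j) =
      𝔼 A ∈ V.powersetCard l, (f A - μ) * subsetMean l (fun C ↦ f C - μ) (V \ A) := by
  simp only [subsetMean, mul_expect]
  rw [← expect_matchings_apply_apply hne hij fun A C ↦ (f A - μ) * (f C - μ)]
  have expand : ∀ B : ι → Finset β, (f (B i) - μ) * (f (B j) - μ) =
      f (B i) * f (B j) - μ * f (B j) - μ * f (B i) + μ ^ 2 := fun B ↦ by ring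
  simp only [expand, expect_add_distrib, expect_sub_distrib, ← mul_expect, expect_const hne,
    expect_matchings_apply hne, ← hμ]
  ring

end Marginals

theorem covariance_bound_general {𝕜 : Type*} [Field 𝕜] [LinearOrder 𝕜] [IsStrictOrderedRing 𝕜]
    (hl : 0 < l) (hV : Fintype.card ι * l ≤ #V) (f : Finset β → 𝕜) {μ : 𝕜}
    (hμ : μ = 𝔼 A ∈ V.powersetCard l, f A) {i j : ι} (hij : i ≠ j) :
    |(𝔼 B ∈ matchings ι V l, f (B i) * f (B j)) -
        (𝔼 B ∈ matchings ι V l, f (B i)) * 𝔼 B ∈ matchings ι V l, f (B j)| ≤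
      (𝔼 A ∈ V.powersetCard l, (f A - μ) ^ 2) / (Fintype.card ι - 1) := by
  have hι : 1 < Fintype.card ι := Fintype.one_lt_card_iff.2 ⟨i, j, hij⟩
  have hι1 : (0 : 𝕜) < Fintype.card ι - 1 := sub_pos.2 (mod_cast hι)
  rcases (matchings ι V l).eq_empty_or_nonempty with hempty | hne
  · simp only [hempty, expect_empty, mul_zero, sub_zero, abs_zero]
    exact div_nonneg (expect_nonneg fun _ _ ↦ sq_nonneg _) hι1.le
  have h2l : 2 * l ≤ #V := (Nat.mul_le_mul_right l hι).trans hV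
  have hmean : 𝔼 A ∈ V.powersetCard l, (f A - μ) = 0 := by
    rw [expect_sub_distrib, expect_const (powersetCard_nonempty.2 (by omega)), ← hμ, sub_self]
  have spectral := abs_expect_mul_subsetMean_sdiff_le h2l hmean
  have hsize : (Fintype.card ι - 1) * (l : 𝕜) ≤ #V - l := by
    have : (Fintype.card ι : 𝕜) * l ≤ #V := mod_cast hV
    linarith
  rw [covariance_matchings_eq hne hij hμ, le_div_iff₀ hι1]
  refine le_of_mul_le_mul_left ?_ (Nat.cast_pos.2 hl : (0 : 𝕜) < l)
  linear_combination spectral + mul_le_mul_of_nonneg_right hsize (abs_nonneg _)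

end Matchings

lemma tupleSpace_eq_matchings (m l t : ℕ) :
    tupleSpace m l t = matchings (Fin t) (range m) l := by
  ext B
  rw [mem_matchings, tupleSpace, mem_filter, Fintype.mem_piFinset]

theorem covariance_bound (m l t : ℕ) (hm : 0 < m) (hl : 0 < l) (ht : 2 ≤ t)
    (hml : t * l ≤ m) (G : Finset (Finset ℕ)) (hG : G ⊆ (Finset.range m).powersetCard l)
    (α : ℝ) (hα : α = (G.card : ℝ) / (m.choose l : ℝ)) (i j : Fin t) (hij : i ≠ j) :
    |(∑ B ∈ tupleSpace m l t, indG G i B * indG G j B) / ((tupleSpace m l t).card : ℝ) -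
        (∑ B ∈ tupleSpace m l t, indG G i B) / ((tupleSpace m l t).card : ℝ) *
          ((∑ B ∈ tupleSpace m l t, indG G j B) / ((tupleSpace m l t).card : ℝ))| ≤
      α * (1 - α) / ((t : ℝ) - 1) := by
  have hα' : α = #G / #((range m).powersetCard l) := by rw [card_powersetCard, card_range, hα]
  have hmean : α = 𝔼 A ∈ (range m).powersetCard l, if A ∈ G then 1 else 0 := by
    rw [expect_eq_sum_div_card, sum_boole, filter_mem_eq_inter, inter_eq_right.2 hG, hα']
  simp only [← expect_eq_sum_div_card, indG, tupleSpace_eq_matchings]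
  rw [← expect_ite_mem_sub_sq hG hα']
  simpa only [Fintype.card_fin] using covariance_bound_general hl
    (by rwa [Fintype.card_fin, card_range]) (fun A ↦ if A ∈ G then (1 : ℝ) else 0) hmean hij
end

section
/- Suppose m, l, t are positive integers with m ≥ tl. Let G be a family of l-element subsets of [m] and α := |G|/C(m,l). Let B = (B_1,…,B_t) be a uniformly random ordered tuple of t pairwise disjoint l-element subsets of [m], and let η := |{i ∈ [t] : B_i ∈ G}|. Then for any real β > 0, Pr[|η − αt| ≥ 2β√t] ≤ 2·e^{−β²/2}. -/
open Finset

/-!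
For independent blocks the theorem is Hoeffding's inequality. Independence is replaced by
`𝔼 ∏ i, f i (B i) ≤ ∏ i, √(𝔼 A, f i A ^ 2)` for nonnegative `f i`, with `B` a uniformly random
matching and `A` a uniformly random `l`-set. To prove it, write `f i = √(u i)`. A transposition `τ`
moves at most two blocks of a matching, so by Cauchy–Schwarz the left-hand side does not decrease
when every `u i` is replaced by the average of `u i` and `u i ∘ τ`, while `𝔼 u i` is unchanged. By
compactness and strict convexity some `u` fixed by all these averagings is at least as good as the
given one; it is constant in each coordinate, and there the two sides agree.

With `f i = exp (c * (g i - 𝔼 g i))` the right-hand side involves moment generating functions at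
`2 * c`, and Hoeffding's lemma and Chernoff's bound finish the proof.
-/

open scoped BigOperators

theorem exists_mem_forall_eq_self_of_midpoint_mem {E : Type*} [NormedAddCommGroup E]
    [NormedSpace ℝ E] [StrictConvexSpace ℝ E] [ProperSpace E] {K : Set E} (hK : IsClosed K)
    (hne : K.Nonempty) {Φ : Set (E → E)} (hnorm : ∀ φ ∈ Φ, ∀ x, ‖φ x‖ = ‖x‖)
    (hmid : ∀ φ ∈ Φ, ∀ x ∈ K, (1 / 2 : ℝ) • (x + φ x) ∈ K) :
    ∃ x ∈ K, ∀ φ ∈ Φ, φ x = x := by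
  obtain ⟨x, hx, hdist⟩ := hK.exists_infDist_eq_dist hne 0
  refine ⟨x, hx, fun φ hφ => ?_⟩
  by_contra hmoved
  have hlt := (norm_midpoint_lt_iff (hnorm φ hφ x).symm).2 (Ne.symm hmoved)
  have hle := Metric.infDist_le_dist_of_mem (x := 0) (hmid φ hφ x hx)
  rw [hdist, dist_zero_left, dist_zero_left] at hle
  exact hle.not_gt hlt

section TwoPoint

variable {ι : Type*} {u v : ι → ℝ}

theorem sqrt_mul_sqrt_add_sqrt_mul_sqrt_div_two_le {a b c d : ℝ} (ha : 0 ≤ a) (hb : 0 ≤ b)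
    (hc : 0 ≤ c) (hd : 0 ≤ d) : (√a * √c + √b * √d) / 2 ≤ √((a + b) / 2) * √((c + d) / 2) := by
  have h := Real.sum_sqrt_mul_sqrt_le (univ : Finset (Fin 2)) (f := ![a, b]) (g := ![c, d])
    (by simp [Fin.forall_fin_two, ha, hb]) (by simp [Fin.forall_fin_two, hc, hd])
  simp only [Fin.sum_univ_two, Matrix.cons_val_zero, Matrix.cons_val_one] at h
  rw [Real.sqrt_div (add_nonneg ha hb), Real.sqrt_div (add_nonneg hc hd), div_mul_div_comm,
    Real.mul_self_sqrt zero_le_two]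
  gcongr

theorem prod_sqrt_add_prod_sqrt_div_two_le_of_card_le_two {s : Finset ι} (hs : #s ≤ 2)
    (hu : ∀ i, 0 ≤ u i) (hv : ∀ i, 0 ≤ v i) :
    (∏ i ∈ s, √(u i) + ∏ i ∈ s, √(v i)) / 2 ≤ ∏ i ∈ s, √((u i + v i) / 2) := by
  classical
  obtain h | h | h : #s = 0 ∨ #s = 1 ∨ #s = 2 := by lia
  · simp [card_eq_zero.1 h]
  · obtain ⟨i, rfl⟩ := card_eq_one.1 h
    simpa using sqrt_mul_sqrt_add_sqrt_mul_sqrt_div_two_le (hu i) (hv i) zero_le_one zero_le_one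
  · obtain ⟨i, j, hij, rfl⟩ := card_eq_two.1 h
    simpa [prod_pair hij] using
      sqrt_mul_sqrt_add_sqrt_mul_sqrt_div_two_le (hu i) (hv i) (hu j) (hv j)

theorem prod_sqrt_add_prod_sqrt_div_two_le [Fintype ι] (hu : ∀ i, 0 ≤ u i) (hv : ∀ i, 0 ≤ v i)
    (huv : #{i | u i ≠ v i} ≤ 2) :
    (∏ i, √(u i) + ∏ i, √(v i)) / 2 ≤ ∏ i, √((u i + v i) / 2) := by
  have hunchanged {i} (hi : i ∈ ({i | ¬ u i ≠ v i} : Finset ι)) : u i = v i := by simpa using hi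
  have hv_mid : ∏ i with ¬ u i ≠ v i, √(v i) = ∏ i with ¬ u i ≠ v i, √((u i + v i) / 2) :=
    prod_congr rfl fun i hi => by rw [hunchanged hi, add_self_div_two]
  have hu_mid : ∏ i with ¬ u i ≠ v i, √(u i) = ∏ i with ¬ u i ≠ v i, √((u i + v i) / 2) :=
    prod_congr rfl fun i hi => by rw [hunchanged hi, add_self_div_two]
  simp only [← prod_filter_mul_prod_filter_not univ fun i => u i ≠ v i]
  rw [hu_mid, hv_mid, ← add_mul, mul_div_right_comm]
  gcongr
  exact prod_sqrt_add_prod_sqrt_div_two_le_of_card_le_two huv hu hv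

end TwoPoint

section Symmetrization

variable {G X ι : Type*} [Group G] [MulAction G X] [Fintype ι] {M : Finset (ι → X)}

theorem eq_of_forall_smul_eq_of_closure_eq_top [MulAction.IsPretransitive G X] {S : Set G}
    (hS : Subgroup.closure S = ⊤) {Y : Type*} {f : X → Y} (hf : ∀ g ∈ S, ∀ x, f (g • x) = f x)
    (x y : X) : f x = f y := by
  obtain ⟨g, rfl⟩ := MulAction.exists_smul_eq G y x
  have hg : g ∈ Subgroup.closure S := hS ▸ Subgroup.mem_top g
  induction hg using Subgroup.closure_induction generalizing y with
  | mem g hg => exact hf g hg y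
  | one => rw [one_smul]
  | mul g h _ _ hg hh => rw [mul_smul, hg, hh]
  | inv g _ hg => rw [← hg (g⁻¹ • y), smul_inv_smul]

theorem expect_prod_sqrt_le_expect_prod_sqrt_midpoint [DecidableEq X] {g : G}
    (hM : ∀ B, g • B ∈ M ↔ B ∈ M) (hmoved : ∀ B ∈ M, #{i | g • B i ≠ B i} ≤ 2) {u : ι → X → ℝ}
    (hu : ∀ i x, 0 ≤ u i x) :
    𝔼 B ∈ M, ∏ i, √(u i (B i)) ≤ 𝔼 B ∈ M, ∏ i, √((u i (B i) + u i (g • B i)) / 2) := by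
  have htranslate : 𝔼 B ∈ M, ∏ i, √(u i (g • B i)) = 𝔼 B ∈ M, ∏ i, √(u i (B i)) :=
    expect_equiv (MulAction.toPerm g) (fun B => (hM B).symm) fun B _ => rfl
  calc 𝔼 B ∈ M, ∏ i, √(u i (B i))
      = 𝔼 B ∈ M, (∏ i, √(u i (B i)) + ∏ i, √(u i (g • B i))) / 2 := by
        rw [← expect_div, expect_add_distrib, htranslate, add_self_div_two]
    _ ≤ _ := expect_le_expect fun B hB => by
        refine prod_sqrt_add_prod_sqrt_div_two_le (fun i => hu i _) (fun i => hu i _)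
          ((card_le_card fun i hi => ?_).trans (hmoved B hB))
        simp only [mem_filter_univ] at hi ⊢
        exact fun h => hi (by rw [h])

/-- The isometry `w ↦ fun (i, x) ↦ w (i, g • x)`. Families `ι → X → ℝ` are encoded as vectors of a
Euclidean space in order to use the strict convexity of its norm. -/
noncomputable def translateIsometry (ι : Type*) [Fintype ι] [Fintype X] (g : G) :
    EuclideanSpace ℝ (ι × X) ≃ₗᵢ[ℝ] EuclideanSpace ℝ (ι × X) :=
  LinearIsometryEquiv.piLpCongrLeft 2 ℝ ℝ ((Equiv.refl ι).prodCongr (MulAction.toPerm g)).symm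

/-- The families that compete with `u` in the symmetrization argument: the nonnegative ones with the
means of `u` whose expected product of square roots is at least that of `u`. -/
def competitors [Fintype X] (M : Finset (ι → X)) (u : ι → X → ℝ) : Set (EuclideanSpace ℝ (ι × X)) :=
  {w | (∀ i x, 0 ≤ w (i, x)) ∧ (∀ i, 𝔼 x, w (i, x) = 𝔼 x, u i x) ∧
    𝔼 B ∈ M, ∏ i, √(u i (B i)) ≤ 𝔼 B ∈ M, ∏ i, √(w (i, B i))}

variable [Fintype X] {u : ι → X → ℝ}

theorem translateIsometry_apply (g : G) (w : EuclideanSpace ℝ (ι × X)) (i : ι) (x : X) :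
    translateIsometry ι g w (i, x) = w (i, g • x) :=
  rfl

theorem isClosed_competitors : IsClosed (competitors M u) := by
  simp only [competitors, Set.ofPred_and, Set.ofPred_forall, expect_eq_sum_div_card]
  refine (isClosed_iInter fun i => isClosed_iInter fun x => isClosed_le ?_ ?_).inter
    ((isClosed_iInter fun i => isClosed_eq ?_ ?_).inter (isClosed_le ?_ ?_)) <;> fun_prop

theorem midpoint_translate_mem_competitors [DecidableEq X] {g : G} (hM : ∀ B, g • B ∈ M ↔ B ∈ M)
    (hmoved : ∀ B ∈ M, #{i | g • B i ≠ B i} ≤ 2) {w : EuclideanSpace ℝ (ι × X)}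
    (hw : w ∈ competitors M u) : (1 / 2 : ℝ) • (w + translateIsometry ι g w) ∈ competitors M u := by
  obtain ⟨hnonneg, hmean, hle⟩ := hw
  have hmid (i x) : ((1 / 2 : ℝ) • (w + translateIsometry ι g w)) (i, x) =
      (w (i, x) + w (i, g • x)) / 2 := by
    simp [translateIsometry_apply, inv_mul_eq_div, add_div]
  have htranslate (i) : 𝔼 x, w (i, g • x) = 𝔼 x, w (i, x) :=
    Fintype.expect_equiv (MulAction.toPerm g) _ _ fun x => rfl
  simp only [competitors, Set.mem_ofPred_eq, hmid]
  refine ⟨fun i x => by linarith [hnonneg i x, hnonneg i (g • x)], fun i => ?_,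
    hle.trans (expect_prod_sqrt_le_expect_prod_sqrt_midpoint hM hmoved hnonneg)⟩
  rw [← expect_div, expect_add_distrib, htranslate, add_self_div_two, hmean]

theorem exists_invariant_expect_prod_sqrt_le [DecidableEq X] {S : Set G}
    (hM : ∀ g ∈ S, ∀ B, g • B ∈ M ↔ B ∈ M)
    (hmoved : ∀ g ∈ S, ∀ B ∈ M, #{i | g • B i ≠ B i} ≤ 2) (hu : ∀ i x, 0 ≤ u i x) :
    ∃ w : ι → X → ℝ, (∀ i, 𝔼 x, w i x = 𝔼 x, u i x) ∧
      𝔼 B ∈ M, ∏ i, √(u i (B i)) ≤ 𝔼 B ∈ M, ∏ i, √(w i (B i)) ∧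
      ∀ g ∈ S, ∀ i x, w i (g • x) = w i x := by
  have hne : (competitors M u).Nonempty :=
    ⟨WithLp.toLp 2 fun p => u p.1 p.2, hu, fun _ => rfl, le_rfl⟩
  obtain ⟨w, ⟨-, hmean, hle⟩, hfix⟩ := exists_mem_forall_eq_self_of_midpoint_mem
    (Φ := (fun g => ⇑(translateIsometry ι g)) '' S) isClosed_competitors hne
    (Set.forall_mem_image.2 fun g _ => (translateIsometry ι g).norm_map)
    (Set.forall_mem_image.2 fun g hg _ =>
      midpoint_translate_mem_competitors (hM g hg) (hmoved g hg))
  refine ⟨fun i x => w (i, x), hmean, hle, fun g hg i x => ?_⟩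
  exact congr($(Set.forall_mem_image.1 hfix hg) (i, x))

theorem expect_prod_le_prod_sqrt_expect_sq [MulAction.IsPretransitive G X] [DecidableEq X]
    {S : Set G} (hS : Subgroup.closure S = ⊤) (hM : ∀ g ∈ S, ∀ B, g • B ∈ M ↔ B ∈ M)
    (hmoved : ∀ g ∈ S, ∀ B ∈ M, #{i | g • B i ≠ B i} ≤ 2) {f : ι → X → ℝ}
    (hf : ∀ i x, 0 ≤ f i x) :
    𝔼 B ∈ M, ∏ i, f i (B i) ≤ ∏ i, √(𝔼 x, f i x ^ 2) := by
  obtain ⟨w, hmean, hle, hinv⟩ :=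
    exists_invariant_expect_prod_sqrt_le hM hmoved fun i x => sq_nonneg (f i x)
  have hconst (i x) : w i x = 𝔼 y, f i y ^ 2 := by
    have : Nonempty X := ⟨x⟩
    rw [← hmean, expect_congr rfl fun y _ => eq_of_forall_smul_eq_of_closure_eq_top hS
      (fun g hg => hinv g hg i) y x, Fintype.expect_const]
  simp only [Real.sqrt_sq (hf _ _), hconst] at hle
  obtain rfl | hne := M.eq_empty_or_nonempty
  · rw [expect_empty]
    positivity
  · rwa [expect_const hne] at hle

end Symmetrization

section Chernoff

theorem card_filter_le_exp_mul_sum_exp {Ω : Type*} (M : Finset Ω) (Z : Ω → ℝ) {c : ℝ} (hc : 0 ≤ c)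
    (s : ℝ) :
    (#{ω ∈ M | s ≤ Z ω} : ℝ) ≤ Real.exp (-(c * s)) * ∑ ω ∈ M, Real.exp (c * Z ω) := by
  rw [card_filter, mul_sum]
  push_cast
  refine sum_le_sum fun ω _ => ?_
  rw [← Real.exp_add]
  split_ifs with h
  · exact Real.one_le_exp (by linarith [mul_le_mul_of_nonneg_left h hc])
  · positivity

theorem integral_toMeasure_uniformOfFintype {X : Type*} [Fintype X] [Nonempty X]
    [MeasurableSpace X] [MeasurableSingletonClass X] (f : X → ℝ) :
    ∫ x, f x ∂(PMF.uniformOfFintype X).toMeasure = 𝔼 x, f x := by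
  simp [PMF.integral_eq_sum, Fintype.expect_eq_sum_div_card, inv_mul_eq_div, sum_div]

theorem expect_exp_mul_sub_expect_le {X : Type*} [Fintype X] [Nonempty X] {g : X → ℝ} {a b : ℝ}
    (hg : ∀ x, g x ∈ Set.Icc a b) (c : ℝ) :
    𝔼 x, Real.exp (c * (g x - 𝔼 y, g y)) ≤ Real.exp (c ^ 2 * (b - a) ^ 2 / 8) := by
  let _ : MeasurableSpace X := ⊤
  have h := (ProbabilityTheory.hasSubgaussianMGF_of_mem_Icc (X := g)
    (μ := (PMF.uniformOfFintype X).toMeasure) (by fun_prop) (.of_forall hg)).mgf_le c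
  simp only [ProbabilityTheory.mgf, integral_toMeasure_uniformOfFintype] at h
  convert h using 2
  simp only [NNReal.coe_pow, NNReal.coe_div, coe_nnnorm, NNReal.coe_ofNat, div_pow,
    Real.norm_eq_abs, sq_abs]
  ring

end Chernoff

section Matchings

open scoped Pointwise

theorem swap_smul_finset_eq_self {V : Type*} [DecidableEq V] {a b : V} {A : Finset V} (ha : a ∉ A)
    (hb : b ∉ A) : Equiv.swap a b • A = A := by
  conv_rhs => rw [← image_id (s := A)]
  exact image_congr fun x hx => Equiv.swap_apply_of_ne_of_ne
    (ne_of_mem_of_not_mem hx ha) (ne_of_mem_of_not_mem hx hb)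

/-- The ordered matchings indexed by `ι`: tuples of pairwise disjoint `l`-element subsets of `V`.
The blocks have type `Set.powersetCard V l`, on which the permutations of `V` act transitively. -/
def orderedMatchings (ι V : Type*) [Fintype ι] [DecidableEq ι] [Fintype V] [DecidableEq V] (l : ℕ) :
    Finset (ι → Set.powersetCard V l) :=
  {B | ∀ i j, i ≠ j → Disjoint (B i : Finset V) (B j)}

variable {ι V : Type*} [Fintype ι] [DecidableEq ι] [Fintype V] [DecidableEq V] {l : ℕ}

theorem mem_orderedMatchings {B : ι → Set.powersetCard V l} :
    B ∈ orderedMatchings ι V l ↔ ∀ i j, i ≠ j → Disjoint (B i : Finset V) (B j) :=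
  mem_filter_univ B

theorem smul_mem_orderedMatchings_iff (σ : Equiv.Perm V) (B : ι → Set.powersetCard V l) :
    σ • B ∈ orderedMatchings ι V l ↔ B ∈ orderedMatchings ι V l := by
  simp only [mem_orderedMatchings, Pi.smul_apply, Set.powersetCard.coe_smul, smul_finset_def,
    disjoint_image (MulAction.injective σ)]

theorem card_blocks_mem_le_one {B : ι → Set.powersetCard V l} (hB : B ∈ orderedMatchings ι V l)
    (a : V) : #{i | a ∈ (B i : Finset V)} ≤ 1 := by
  refine card_le_one.2 fun i hi j hj => by_contra fun hij => ?_
  rw [mem_filter_univ] at hi hj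
  exact disjoint_left.1 (mem_orderedMatchings.1 hB i j hij) hi hj

theorem card_moved_blocks_le_two {σ : Equiv.Perm V} (hσ : σ.IsSwap)
    {B : ι → Set.powersetCard V l} (hB : B ∈ orderedMatchings ι V l) :
    #{i | σ • B i ≠ B i} ≤ 2 := by
  obtain ⟨a, b, -, rfl⟩ := hσ
  have hsub : ({i | Equiv.swap a b • B i ≠ B i} : Finset ι) ⊆
      ({i | a ∈ (B i : Finset V)} : Finset ι) ∪ ({i | b ∈ (B i : Finset V)} : Finset ι) := by
    intro i
    simp only [mem_union, mem_filter_univ]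
    contrapose!
    exact fun h => Subtype.ext (Set.powersetCard.coe_smul.trans (swap_smul_finset_eq_self h.1 h.2))
  exact (card_le_card hsub).trans <| (card_union_le _ _).trans
    (add_le_add (card_blocks_mem_le_one hB a) (card_blocks_mem_le_one hB b))

theorem expect_orderedMatchings_prod_le {f : ι → Set.powersetCard V l → ℝ}
    (hf : ∀ i A, 0 ≤ f i A) :
    𝔼 B ∈ orderedMatchings ι V l, ∏ i, f i (B i) ≤ ∏ i, √(𝔼 A, f i A ^ 2) :=
  have := Set.powersetCard.isPretransitive (α := V) (n := l)
  expect_prod_le_prod_sqrt_expect_sq Equiv.Perm.closure_isSwap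
    (fun σ _ => smul_mem_orderedMatchings_iff σ) (fun _ hσ _ => card_moved_blocks_le_two hσ) hf

variable {g : ι → Set.powersetCard V l → ℝ} {a b : ι → ℝ}

theorem expect_orderedMatchings_exp_le (hg : ∀ i A, g i A ∈ Set.Icc (a i) (b i)) (c : ℝ) :
    𝔼 B ∈ orderedMatchings ι V l, Real.exp (c * ∑ i, (g i (B i) - 𝔼 A, g i A)) ≤
      Real.exp (c ^ 2 * (∑ i, (b i - a i) ^ 2) / 4) := by
  have hblock (i) : √(𝔼 A, Real.exp (c * (g i A - 𝔼 A', g i A')) ^ 2) ≤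
      Real.exp (c ^ 2 * (b i - a i) ^ 2 / 4) := by
    obtain _ | _ := isEmpty_or_nonempty (Set.powersetCard V l)
    · rw [univ_eq_empty, expect_empty, Real.sqrt_zero]
      positivity
    rw [Real.sqrt_le_left (by positivity)]
    convert expect_exp_mul_sub_expect_le (hg i) (2 * c) using 3
    · rw [← Real.exp_nat_mul]
      ring_nf
    · rw [← Real.exp_nat_mul]
      ring_nf
  calc _ = 𝔼 B ∈ orderedMatchings ι V l, ∏ i, Real.exp (c * (g i (B i) - 𝔼 A, g i A)) := by
        simp only [mul_sum, Real.exp_sum]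
    _ ≤ ∏ i, √(𝔼 A, Real.exp (c * (g i A - 𝔼 A', g i A')) ^ 2) :=
        expect_orderedMatchings_prod_le (f := fun i A => Real.exp (c * (g i A - 𝔼 A', g i A')))
          fun _ _ => Real.exp_nonneg _
    _ ≤ ∏ i, Real.exp (c ^ 2 * (b i - a i) ^ 2 / 4) :=
        prod_le_prod (fun _ _ => Real.sqrt_nonneg _) fun i _ => hblock i
    _ = Real.exp (c ^ 2 * (∑ i, (b i - a i) ^ 2) / 4) := by
        rw [← Real.exp_sum, ← sum_div, ← mul_sum]

theorem card_filter_le_sum_sub_expect_le (hg : ∀ i A, g i A ∈ Set.Icc (a i) (b i))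
    (hab : 0 < ∑ i, (b i - a i) ^ 2) {s : ℝ} (hs : 0 ≤ s) :
    (#{B ∈ orderedMatchings ι V l | s ≤ ∑ i, (g i (B i) - 𝔼 A, g i A)} : ℝ) ≤
      Real.exp (-s ^ 2 / ∑ i, (b i - a i) ^ 2) * #(orderedMatchings ι V l) := by
  set v := ∑ i, (b i - a i) ^ 2
  -- `c = 2 * s / v` minimises the exponent `c ^ 2 * v / 4 - c * s`.
  have h := card_filter_le_exp_mul_sum_exp (orderedMatchings ι V l)
    (fun B => ∑ i, (g i (B i) - 𝔼 A, g i A)) (c := 2 * s / v) (by positivity) s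
  refine h.trans ?_
  rw [← card_mul_expect, mul_left_comm, mul_comm]
  gcongr
  calc _ ≤ Real.exp (-(2 * s / v * s)) * Real.exp ((2 * s / v) ^ 2 * v / 4) := by
        gcongr
        exact expect_orderedMatchings_exp_le hg _
    _ = Real.exp (-s ^ 2 / v) := by
        rw [← Real.exp_add]
        congr 1
        field

theorem intersection_azuma_general (hg : ∀ i A, g i A ∈ Set.Icc (a i) (b i))
    (hab : 0 < ∑ i, (b i - a i) ^ 2) {s : ℝ} (hs : 0 ≤ s) :
    (#{B ∈ orderedMatchings ι V l | s ≤ |∑ i, (g i (B i) - 𝔼 A, g i A)|} : ℝ) ≤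
      2 * Real.exp (-s ^ 2 / ∑ i, (b i - a i) ^ 2) * #(orderedMatchings ι V l) := by
  have hupper := card_filter_le_sum_sub_expect_le hg hab hs
  have hlower := card_filter_le_sum_sub_expect_le (g := fun i A => -g i A) (a := -b) (b := -a)
    (fun i A => ⟨neg_le_neg (hg i A).2, neg_le_neg (hg i A).1⟩)
    (by simpa only [Pi.neg_apply, neg_sub_neg] using hab) hs
  have hneg (B : ι → Set.powersetCard V l) :
      ∑ i, (-g i (B i) - 𝔼 A, -g i A) = -∑ i, (g i (B i) - 𝔼 A, g i A) := by
    simp only [expect_neg_distrib, ← sum_neg_distrib, neg_sub', sub_neg_eq_add]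
  simp only [hneg, Pi.neg_apply, neg_sub_neg] at hlower
  simp only [le_abs, filter_or]
  refine (Nat.cast_le.2 (card_union_le _ _)).trans ?_
  push_cast
  linarith

end Matchings

section NatBlocks

/-- The identification of the `l`-element subsets of `Fin m` with those of `{0, …, m - 1} ⊆ ℕ`,
which are the blocks of `tupleSpace`. -/
def natBlock (m l : ℕ) : Set.powersetCard (Fin m) l ↪ Finset ℕ :=
  (Function.Embedding.subtype _).trans (mapEmbedding Fin.valEmbedding).toEmbedding

variable {m l t : ℕ}

theorem map_natBlock_univ : univ.map (natBlock m l) = (range m).powersetCard l := by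
  have hrange : range m = univ.map (Fin.valEmbedding (n := m)) := by
    rw [Fin.map_valEmbedding_univ, Nat.Iio_eq_range]
  rw [hrange, powersetCard_map, natBlock, ← map_map]
  congr 1
  ext A
  simp

theorem tupleSpace_eq_map_orderedMatchings :
    tupleSpace m l t = (orderedMatchings (Fin t) (Fin m) l).map (natBlock m l).arrowCongrRight := by
  ext B
  simp only [tupleSpace, mem_filter, Fintype.mem_piFinset, ← map_natBlock_univ, mem_map, mem_univ,
    true_and, mem_orderedMatchings]
  constructor
  · rintro ⟨hB, hdisj⟩
    choose A hA using hB
    obtain rfl : (natBlock m l).arrowCongrRight A = B := funext hA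
    exact ⟨A, fun i j hij => (disjoint_map _).1 (hdisj i j hij), rfl⟩
  · rintro ⟨A, hA, rfl⟩
    exact ⟨fun i => ⟨A i, rfl⟩, fun i j hij => (disjoint_map _).2 (hA i j hij)⟩

theorem expect_natBlock_mem {G : Finset (Finset ℕ)} (hG : G ⊆ (range m).powersetCard l) :
    𝔼 A, (if natBlock m l A ∈ G then 1 else 0 : ℝ) = #G / m.choose l := by
  have hcard : Fintype.card (Set.powersetCard (Fin m) l) = m.choose l := by
    rw [← Nat.card_eq_fintype_card, Set.powersetCard.card, Nat.card_fin]
  have hsum := sum_map univ (natBlock m l) fun A => (if A ∈ G then 1 else 0 : ℝ)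
  rw [map_natBlock_univ, sum_boole, filter_mem_eq_inter, inter_eq_right.2 hG] at hsum
  rw [Fintype.expect_eq_sum_div_card, hcard, hsum]

theorem hits_arrowCongrRight_natBlock (G : Finset (Finset ℕ))
    (B : Fin t → Set.powersetCard (Fin m) l) :
    (hits G ((natBlock m l).arrowCongrRight B) : ℝ) =
      ∑ i, if natBlock m l (B i) ∈ G then 1 else 0 := by
  rw [sum_boole]
  rfl

theorem hits_sub_eq_sum_sub_expect {G : Finset (Finset ℕ)} (hG : G ⊆ (range m).powersetCard l)
    (B : Fin t → Set.powersetCard (Fin m) l) :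
    (hits G ((natBlock m l).arrowCongrRight B) : ℝ) - #G / m.choose l * t =
      ∑ i, ((if natBlock m l (B i) ∈ G then 1 else 0) -
        𝔼 A, if natBlock m l A ∈ G then 1 else 0) := by
  rw [hits_arrowCongrRight_natBlock, expect_natBlock_mem hG, sum_sub_distrib, sum_const, card_univ,
    Fintype.card_fin, nsmul_eq_mul, mul_comm (t : ℝ)]

theorem card_filter_le_abs_hits_sub_le (ht : 0 < t) {G : Finset (Finset ℕ)}
    (hG : G ⊆ (range m).powersetCard l) {s : ℝ} (hs : 0 ≤ s) :
    (#{B ∈ tupleSpace m l t | s ≤ |(hits G B : ℝ) - #G / m.choose l * t|} : ℝ) ≤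
      2 * Real.exp (-s ^ 2 / t) * #(tupleSpace m l t) := by
  have h := intersection_azuma_general (ι := Fin t) (V := Fin m) (l := l)
    (g := fun _ A => if natBlock m l A ∈ G then 1 else 0) (a := 0) (b := 1)
    (fun i A => by split_ifs <;> simp) (by simpa) hs
  rw [tupleSpace_eq_map_orderedMatchings, filter_map, card_map, card_map]
  simp only [Function.comp_def, hits_sub_eq_sum_sub_expect hG]
  simpa using h

end NatBlocks

theorem intersection_azuma (m l t : ℕ) (hm : 0 < m) (hl : 0 < l) (ht : 0 < t)
    (hml : t * l ≤ m) (G : Finset (Finset ℕ)) (hG : G ⊆ (Finset.range m).powersetCard l)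
    (α : ℝ) (hα : α = (G.card : ℝ) / (m.choose l : ℝ)) :
    ∀ β : ℝ, 0 < β →
      (((tupleSpace m l t).filter
            fun B => 2 * β * Real.sqrt t ≤ |(hits G B : ℝ) - α * t|).card : ℝ) /
          ((tupleSpace m l t).card : ℝ) ≤
        2 * Real.exp (-β ^ 2 / 2) := by
  intro β hβ
  have ht' : (0 : ℝ) < t := by positivity
  have hexp : -(2 * β * √t) ^ 2 / t ≤ -β ^ 2 / 2 := by
    rw [mul_pow, Real.sq_sqrt ht'.le]
    field_simp
    linarith
  subst hα
  refine div_le_of_le_mul₀ (by positivity) (by positivity) ?_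
  refine (card_filter_le_abs_hits_sub_le ht hG (s := 2 * β * √t) (by positivity)).trans ?_
  gcongr
end

section
/- Let Y be a finite set and l, s, t positive integers. Let F_1, …, F_{s+1} be families of l-element subsets of Y that are cross-dependent and nested, and let B = {B_1, …, B_t} be a collection of t pairwise disjoint l-element subsets of Y. Let x, q be reals with 1 ≤ x ≤ s+1, 1 ≤ q ≤ s+1, and suppose t ≥ s + x + 1. Then: (i) if |B ∩ F_{s+1}| ≥ x, one has |B ∩ F_1| + … + |B ∩ F_s| + q·|B ∩ F_{s+1}| ≤ st + q·|B ∩ F_{s+1}| − sx; and (ii) if |B ∩ F_{s+1}| ≤ x, one has |B ∩ F_1| + … + |B ∩ F_s| + q·|B ∩ F_{s+1}| ≤ st − |B ∩ F_{s+1}|·(x − q·|B ∩ F_{s+1}|/(s+1)). -/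
open Finset

/-!
By Hall's theorem, if `#(B ∩ F i)` were at least the number `s + 2 - i` of indices `j ≥ i` for
every `i`, the families would have distinct representatives in `B`; these are pairwise disjoint,
contradicting cross-dependence. So `#(B ∩ F i) ≤ m` for some `i = s + 1 - m`. By nestedness the
families from the `i`-th on meet `B` in at most `m` sets, and the others in at most `t` sets, so the
sum is at most `(s - m) * t + m ^ 2`. Both bounds are then quadratic inequalities in `m`.
-/

theorem exists_injOn_forall_mem_of_card_filter_le_card {ι β : Type*} [LinearOrder ι] [Nonempty β]
    {I : Finset ι} {G : ι → Finset β} (h : ∀ i ∈ I, #{j ∈ I | i ≤ j} ≤ #(G i)) :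
    ∃ f : ι → β, Set.InjOn f I ∧ ∀ i ∈ I, f i ∈ G i := by
  classical
  have hall (S : Finset I) : #S ≤ #(S.biUnion fun i ↦ G i) := by
    obtain rfl | hS := S.eq_empty_or_nonempty
    · exact Nat.zero_le _
    let i := S.min' hS
    calc #S = #(S.map (.subtype _)) := (card_map _).symm
      _ ≤ #{j ∈ I | i.1 ≤ j} := card_le_card fun j hj ↦ by
        obtain ⟨k, hk, rfl⟩ := mem_map.1 hj
        exact mem_filter.2 ⟨k.2, S.min'_le k hk⟩
      _ ≤ #(G i) := h i i.2
      _ ≤ #(S.biUnion fun i ↦ G i) :=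
        card_le_card (subset_biUnion_of_mem (fun i : I ↦ G i) (S.min'_mem hS))
  obtain ⟨f, hf_inj, hf_mem⟩ := (all_card_le_biUnion_card_iff_exists_injective _).1 hall
  let g : ι → β := Function.extend Subtype.val f fun _ ↦ Classical.arbitrary β
  have hg (i : I) : g i = f i := Subtype.val_injective.extend_apply f _ i
  refine ⟨g, fun i hi j hj hij ↦ ?_, fun i hi ↦ hg ⟨i, hi⟩ ▸ hf_mem ⟨i, hi⟩⟩
  rw [hg ⟨i, hi⟩, hg ⟨j, hj⟩] at hij
  exact congrArg Subtype.val (hf_inj hij)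

theorem sum_Ico_le_nsmul_add_nsmul {M : Type*} [AddCommMonoid M] [PartialOrder M]
    [IsOrderedAddMonoid M] {f : ℕ → M} {a i b : ℕ} {u v : M} (hai : a ≤ i) (hib : i ≤ b)
    (hu : ∀ k ∈ Ico a i, f k ≤ u) (hv : ∀ k ∈ Ico i b, f k ≤ v) :
    ∑ k ∈ Ico a b, f k ≤ (i - a) • u + (b - i) • v := by
  rw [← sum_Ico_consecutive f hai hib, ← Nat.card_Ico a i, ← Nat.card_Ico i b]
  exact add_le_add (sum_le_card_nsmul _ _ _ hu) (sum_le_card_nsmul _ _ _ hv)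

section CrossDependent

variable {ι α : Type*} [PartialOrder α] [OrderBot α]

/-- The families `F i`, `i ∈ I`, are cross-dependent: one cannot choose a member of each of them so
that the chosen members are pairwise disjoint. Members live in any partial order with a least
element, sets being the case of interest; a choice is encoded as a function on all of `ι`, of which
only the values on `I` matter. -/
def CrossDependent (I : Finset ι) (F : ι → Finset α) : Prop :=
  ¬ ∃ g : ι → α, (∀ i ∈ I, g i ∈ F i) ∧ (I : Set ι).PairwiseDisjoint g

variable [DecidableEq α] {B : Finset α}

theorem CrossDependent.exists_card_inter_lt [LinearOrder ι] {I : Finset ι} {F : ι → Finset α}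
    (hF : CrossDependent I F) (hB : (B : Set α).PairwiseDisjoint id) :
    ∃ i ∈ I, #(B ∩ F i) < #{j ∈ I | i ≤ j} := by
  by_contra! h
  obtain ⟨g, hg_inj, hg_mem⟩ := exists_injOn_forall_mem_of_card_filter_le_card h
  have hgB (i : ι) (hi : i ∈ I) : g i ∈ B := mem_of_mem_inter_left (hg_mem i hi)
  exact hF ⟨g, fun i hi ↦ mem_of_mem_inter_right (hg_mem i hi),
    fun i hi j hj hij ↦ hB (hgB i hi) (hgB j hj) (hg_inj.ne hi hj hij)⟩

theorem CrossDependent.exists_sum_card_inter_le {s : ℕ} {F : ℕ → Finset α}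
    (hF : CrossDependent (Icc 1 (s + 1)) F) (hanti : AntitoneOn F (Set.Icc 1 (s + 1)))
    (hB : (B : Set α).PairwiseDisjoint id) :
    ∃ m ≤ s, #(B ∩ F (s + 1)) ≤ m ∧ ∑ i ∈ Icc 1 s, #(B ∩ F i) ≤ (s - m) * #B + m ^ 2 := by
  obtain ⟨i, hi, hlt⟩ := hF.exists_card_inter_lt hB
  obtain ⟨hi1, his⟩ := mem_Icc.1 hi
  have hupper : {j ∈ Icc 1 (s + 1) | i ≤ j} = Icc i (s + 1) := by
    ext j; simp only [mem_filter, mem_Icc]; lia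
  rw [hupper, Nat.card_Icc] at hlt
  have htail (k : ℕ) (hik : i ≤ k) (hks : k ≤ s + 1) : #(B ∩ F k) ≤ s + 1 - i :=
    calc #(B ∩ F k) ≤ #(B ∩ F i) :=
          card_le_card (inter_subset_inter_left (hanti ⟨hi1, his⟩ ⟨hi1.trans hik, hks⟩ hik))
      _ ≤ s + 1 - i := by lia
  refine ⟨s + 1 - i, by lia, htail _ his le_rfl, ?_⟩
  calc ∑ k ∈ Ico 1 (s + 1), #(B ∩ F k) ≤ (i - 1) • #B + (s + 1 - i) • (s + 1 - i) :=
        sum_Ico_le_nsmul_add_nsmul hi1 his (fun _ _ ↦ card_le_card inter_subset_left)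
          fun k hk ↦ htail k (mem_Ico.1 hk).1 (mem_Ico.1 hk).2.le
    _ = (s - (s + 1 - i)) * #B + (s + 1 - i) ^ 2 := by
        rw [smul_eq_mul, smul_eq_mul, sq, show s - (s + 1 - i) = i - 1 by lia]

end CrossDependent

theorem sub_mul_add_sq_le_of_le {R : Type*} [CommRing R] [LinearOrder R] [IsStrictOrderedRing R]
    {s m t x : R} (hm : 0 ≤ m) (hms : m ≤ s) (hxm : x ≤ m) (ht : s + x ≤ t) :
    (s - m) * t + m ^ 2 ≤ s * t - s * x := by
  have hslack : 0 ≤ m * (t - (s + x)) := mul_nonneg hm (sub_nonneg.2 ht)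
  have hprod : 0 ≤ (s - m) * (m - x) := mul_nonneg (sub_nonneg.2 hms) (sub_nonneg.2 hxm)
  linear_combination hslack + hprod

section Field

variable {𝕜 : Type*} [Field 𝕜] [LinearOrder 𝕜] [IsStrictOrderedRing 𝕜]

theorem sub_mul_add_sq_add_mul_le {s m t x q b : 𝕜} (hb : 0 ≤ b) (hbm : b ≤ m) (hms : m ≤ s)
    (hbx : b ≤ x) (hq : q ≤ s + 1) (ht : s + x + 1 ≤ t) :
    (s - m) * t + m ^ 2 + q * b ≤ s * t - b * (x - q * b / (s + 1)) := by
  have hs : 0 < s + 1 := by linarith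
  -- The claim is affine in `q` with nonnegative slope, so the worst case is `q = s + 1`.
  have hq_worst : q * b - b * (q * b / (s + 1)) ≤ b * (s + 1 - b) :=
    calc q * b - b * (q * b / (s + 1)) = q / (s + 1) * (b * (s + 1 - b)) := by field
      _ ≤ b * (s + 1 - b) :=
        mul_le_of_le_one_left (mul_nonneg hb (by linarith)) ((div_le_one hs).2 hq)
  have hslack : 0 ≤ m * (t - (s + x + 1)) := mul_nonneg (hb.trans hbm) (sub_nonneg.2 ht)
  have hprod : 0 ≤ (m - b) * (s + 1 + x - m - b) :=
    mul_nonneg (sub_nonneg.2 hbm) (by linarith)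
  linear_combination hq_worst + hslack + hprod

theorem cross_dependent_matching_bound_general {α : Type*} [PartialOrder α] [OrderBot α]
    [DecidableEq α] {s : ℕ} {F : ℕ → Finset α} {B : Finset α} {x q : 𝕜}
    (hF : CrossDependent (Icc 1 (s + 1)) F) (hanti : AntitoneOn F (Set.Icc 1 (s + 1)))
    (hB : (B : Set α).PairwiseDisjoint id) (hq : q ≤ s + 1) (hx : s + x + 1 ≤ #B) :
    (x ≤ #(B ∩ F (s + 1)) →
      ∑ i ∈ Icc 1 s, (#(B ∩ F i) : 𝕜) + q * #(B ∩ F (s + 1)) ≤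
        s * #B + q * #(B ∩ F (s + 1)) - s * x) ∧
    (#(B ∩ F (s + 1)) ≤ x →
      ∑ i ∈ Icc 1 s, (#(B ∩ F i) : 𝕜) + q * #(B ∩ F (s + 1)) ≤
        s * #B - #(B ∩ F (s + 1)) * (x - q * #(B ∩ F (s + 1)) / (s + 1))) := by
  obtain ⟨m, hms, hbm, hsum⟩ := hF.exists_sum_card_inter_le hanti hB
  have hms' : (m : 𝕜) ≤ s := mod_cast hms
  have hbm' : (#(B ∩ F (s + 1)) : 𝕜) ≤ m := mod_cast hbm
  have hsum' : ∑ i ∈ Icc 1 s, (#(B ∩ F i) : 𝕜) ≤ (s - m) * #B + m ^ 2 := by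
    rw [← Nat.cast_sub hms]
    exact_mod_cast hsum
  refine ⟨fun hxb ↦ ?_, fun hbx ↦ ?_⟩
  · have := sub_mul_add_sq_le_of_le m.cast_nonneg hms' (hxb.trans hbm')
      (by linarith : (s : 𝕜) + x ≤ #B)
    linarith
  · exact (add_le_add_left hsum' _).trans
      (sub_mul_add_sq_add_mul_le (Nat.cast_nonneg _) hbm' hms' hbx hq hx)

end Field

theorem cross_dependent_matching_bound (Y : Finset ℕ) (l s t : ℕ)
    (hl : 0 < l) (hs : 0 < s) (ht : 0 < t)
    (F : ℕ → Finset (Finset ℕ))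
    (hF : ∀ i ∈ Finset.Icc 1 (s + 1), ∀ A ∈ F i, A ⊆ Y ∧ A.card = l)
    (hnested : ∀ i ∈ Finset.Icc 1 s, F (i + 1) ⊆ F i)
    (hcross : ¬ ∃ g : ℕ → Finset ℕ,
      (∀ i ∈ Finset.Icc 1 (s + 1), g i ∈ F i) ∧
      ∀ i ∈ Finset.Icc 1 (s + 1), ∀ j ∈ Finset.Icc 1 (s + 1), i ≠ j → Disjoint (g i) (g j))
    (B : Finset (Finset ℕ)) (hBcard : B.card = t)
    (hBsets : ∀ A ∈ B, A ⊆ Y ∧ A.card = l)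
    (hBdisj : (B : Set (Finset ℕ)).Pairwise (fun A A' => Disjoint A A'))
    (x q : ℝ) (hx1 : 1 ≤ x) (hx2 : x ≤ (s : ℝ) + 1) (hq1 : 1 ≤ q) (hq2 : q ≤ (s : ℝ) + 1)
    (htsx : (s : ℝ) + x + 1 ≤ (t : ℝ)) :
    ((x ≤ ((B ∩ F (s + 1)).card : ℝ) →
      (∑ i ∈ Finset.Icc 1 s, ((B ∩ F i).card : ℝ)) + q * ((B ∩ F (s + 1)).card : ℝ) ≤
        (s : ℝ) * t + q * ((B ∩ F (s + 1)).card : ℝ) - (s : ℝ) * x) ∧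
    (((B ∩ F (s + 1)).card : ℝ) ≤ x →
      (∑ i ∈ Finset.Icc 1 s, ((B ∩ F i).card : ℝ)) + q * ((B ∩ F (s + 1)).card : ℝ) ≤
        (s : ℝ) * t - ((B ∩ F (s + 1)).card : ℝ) *
          (x - q * ((B ∩ F (s + 1)).card : ℝ) / ((s : ℝ) + 1)))) := by
  subst hBcard
  exact cross_dependent_matching_bound_general (fun ⟨g, hg, hdisj⟩ ↦ hcross ⟨g, hg, hdisj⟩)
    (antitoneOn_of_succ_le Set.ordConnected_Icc fun i _ hi hi' ↦
      hnested i (mem_Icc.2 ⟨hi.1, Nat.le_of_succ_le_succ hi'.2⟩)) hBdisj hq2 htsx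
end

section
/- Let F be an initial (shifted) family of k-element subsets of [m] with ν(F) ≤ s. Then the set {s+1, 2(s+1), …, k(s+1)} does not belong to F. -/
open Finset

/-- The shifting partial order: `A ≺ B` iff `A ≠ B`, the two sets have the same
size, and the `i`-th smallest element of `A` is at most the `i`-th smallest
element of `B` for every `i`. -/
def ShiftPrec (A B : Finset ℕ) : Prop :=
  A ≠ B ∧ List.Forall₂ (· ≤ ·) (A.sort (· ≤ ·)) (B.sort (· ≤ ·))

/-- A family of subsets of `[m] = {1,…,m}` is initial (shifted) if it is closed
downwards with respect to the shifting partial order. -/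
def IsInitial (m : ℕ) (F : Finset (Finset ℕ)) : Prop :=
  ∀ A B : Finset ℕ, A ⊆ Finset.Icc 1 m → ShiftPrec A B → B ∈ F → A ∈ F

/-- The matching number of a family of finite sets: the maximum size of a
subfamily consisting of pairwise disjoint sets. -/
noncomputable def matchingNumber (F : Finset (Finset ℕ)) : ℕ :=
  sSup {t : ℕ | ∃ M : Finset (Finset ℕ), M ⊆ F ∧
    (M : Set (Finset ℕ)).Pairwise (fun A B => Disjoint A B) ∧ M.card = t}


/-!
Let `n = s + 1` and suppose that the `i`-th smallest element of some nonempty `B ∈ F` is at least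
`i * n` for every `i`. Replacing that element by any element of the block
`((i - 1) * n, i * n]` only decreases it, so shiftedness keeps the result in `F`. Taking from every
block the element in one fixed residue class modulo `n` gives `n` pairwise disjoint members of `F`,
one for each class, which contradicts `ν(F) ≤ s`.
-/

lemma sort_image_of_strictMonoOn {α β : Type*} [LinearOrder α] [LinearOrder β] {f : α → β}
    {B : Finset α} (hf : StrictMonoOn f B) : (B.image f).sort = B.sort.map f := by
  have hlt : (B.sort.map f).Pairwise (· < ·) :=
    List.pairwise_map.2 <| B.sortedLT_sort.pairwise.imp_of_mem fun ha hb hab =>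
      hf (by simpa using ha) (by simpa using hb) hab
  have himage : B.image f = (B.sort.map f).toFinset := by ext; simp
  rw [himage]
  exact (List.toFinset_sort (· ≤ ·) (hlt.imp ne_of_lt)).2 (hlt.imp le_of_lt)

lemma IsInitial.image_mem {m : ℕ} {F : Finset (Finset ℕ)} (hF : IsInitial m F) {B : Finset ℕ}
    (hB : B ∈ F) {f : ℕ → ℕ} (hf : StrictMonoOn f B) (hle : ∀ x ∈ B, f x ≤ x)
    (hsub : B.image f ⊆ Icc 1 m) : B.image f ∈ F := by
  obtain heq | hne := eq_or_ne (B.image f) B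
  · rwa [heq]
  · refine hF _ B hsub ⟨hne, ?_⟩ hB
    rw [sort_image_of_strictMonoOn hf, List.forall₂_map_left_iff, List.forall₂_same]
    simpa using hle

lemma card_le_matchingNumber {F M : Finset (Finset ℕ)} (hMF : M ⊆ F)
    (hM : (M : Set (Finset ℕ)).Pairwise Disjoint) : #M ≤ matchingNumber F :=
  le_csSup ⟨#F, by rintro _ ⟨N, hN, -, rfl⟩; exact card_le_card hN⟩ ⟨M, hMF, hM, rfl⟩

lemma card_le_matchingNumber_of_pairwiseDisjoint {ι : Type*} {F : Finset (Finset ℕ)}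
    {t : Finset ι} {f : ι → Finset ℕ} (hmem : ∀ i ∈ t, f i ∈ F)
    (hne : ∀ i ∈ t, (f i).Nonempty) (hdisj : (t : Set ι).PairwiseDisjoint f) :
    #t ≤ matchingNumber F := by
  have hinj : Set.InjOn f t := fun i hi j hj hij =>
    hdisj.eq_of_le hi hj (hne i hi).ne_empty hij.le
  rw [← card_image_of_injOn hinj]
  refine card_le_matchingNumber (image_subset_iff.2 hmem) ?_
  rw [coe_image, hinj.pairwise_image]
  exact hdisj

/-- The copy of `B` in the residue class of `j + 1` modulo `n`: the `i`-th smallest element of `B`,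
counting from `i = 0`, is replaced by `i * n + j + 1`. For `j < n` these are the members of the
matching. -/
def residueCopy (n j : ℕ) (B : Finset ℕ) : Finset ℕ :=
  B.image fun x => Nat.count (· ∈ B) x * n + j + 1

lemma residueCopy_nonempty {n j : ℕ} {B : Finset ℕ} (hB : B.Nonempty) :
    (residueCopy n j B).Nonempty :=
  hB.image _

lemma modEq_of_mem_residueCopy {n j y : ℕ} {B : Finset ℕ} (hy : y ∈ residueCopy n j B) :
    y ≡ j + 1 [MOD n] := by
  obtain ⟨x, -, rfl⟩ := mem_image.1 hy
  simp [Nat.ModEq, add_assoc]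

lemma pairwiseDisjoint_residueCopy (n : ℕ) (B : Finset ℕ) :
    (range n : Set ℕ).PairwiseDisjoint fun j => residueCopy n j B := by
  intro i hi j hj hij
  refine disjoint_left.2 fun y hyi hyj => hij ?_
  have hmod : i + 1 ≡ j + 1 [MOD n] :=
    (modEq_of_mem_residueCopy hyi).symm.trans (modEq_of_mem_residueCopy hyj)
  exact (hmod.add_right_cancel' 1).eq_of_lt_of_lt (by simpa using hi) (by simpa using hj)

lemma IsInitial.residueCopy_mem {m n j : ℕ} {F : Finset (Finset ℕ)} (hF : IsInitial m F)
    {B : Finset ℕ} (hBF : B ∈ F) (hBm : B ⊆ Icc 1 m)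
    (hB : ∀ x ∈ B, (Nat.count (· ∈ B) x + 1) * n ≤ x) (hj : j < n) : residueCopy n j B ∈ F := by
  have hle : ∀ x ∈ B, Nat.count (· ∈ B) x * n + j + 1 ≤ x := fun x hx => by
    linarith [hB x hx]
  refine hF.image_mem hBF (fun x hx y _ hxy => ?_) hle (image_subset_iff.2 fun x hx => ?_)
  · have hn : 0 < n := by omega
    have hcount : Nat.count (· ∈ B) x < Nat.count (· ∈ B) y := Nat.count_strict_mono hx hxy
    simpa using Nat.mul_lt_mul_of_pos_right hcount hn
  · exact mem_Icc.2 ⟨by omega, (hle x hx).trans (mem_Icc.1 (hBm hx)).2⟩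

lemma count_image_mul_lt {k n i : ℕ} (hi : 0 < i) :
    Nat.count (· ∈ (Icc 1 k).image (· * n)) (i * n) < i := by
  have hsub : {x ∈ range (i * n) | x ∈ (Icc 1 k).image (· * n)} ⊆ (Ico 1 i).image (· * n) := by
    intro x hx
    obtain ⟨hlt, hx⟩ := mem_filter.1 hx
    obtain ⟨l, hl, rfl⟩ := mem_image.1 hx
    exact mem_image_of_mem _ (mem_Ico.2
      ⟨(mem_Icc.1 hl).1, Nat.lt_of_mul_lt_mul_right (mem_range.1 hlt)⟩)
  calc Nat.count (· ∈ (Icc 1 k).image (· * n)) (i * n)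
      ≤ #((Ico 1 i).image (· * n)) := by
        rw [Nat.count_eq_card_filter_range]; exact card_le_card hsub
    _ ≤ #(Ico 1 i) := card_image_le
    _ < i := by rw [Nat.card_Ico]; omega

lemma count_add_one_mul_le_of_mem_image_mul {k n x : ℕ} (hx : x ∈ (Icc 1 k).image (· * n)) :
    (Nat.count (· ∈ (Icc 1 k).image (· * n)) x + 1) * n ≤ x := by
  obtain ⟨i, hi, rfl⟩ := mem_image.1 hx
  exact Nat.mul_le_mul_right n (count_image_mul_lt (mem_Icc.1 hi).1)

/-- With `i = #{y ∈ B | y ≤ x}`, the conclusion says that `B` has at least `i` elements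
below `i * (s + 1)` for some `i ≥ 1`. -/
theorem shifted_avoids_arithmetic_set_general {m s : ℕ} {F : Finset (Finset ℕ)}
    (hinit : IsInitial m F) (hnu : matchingNumber F ≤ s)
    {B : Finset ℕ} (hBF : B ∈ F) (hBm : B ⊆ Icc 1 m) (hB : B.Nonempty) :
    ∃ x ∈ B, x < (Nat.count (· ∈ B) x + 1) * (s + 1) := by
  by_contra! hlarge
  have hmatching : #(range (s + 1)) ≤ matchingNumber F :=
    card_le_matchingNumber_of_pairwiseDisjoint
      (fun j hj => hinit.residueCopy_mem hBF hBm hlarge (mem_range.1 hj))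
      (fun _ _ => residueCopy_nonempty hB) (pairwiseDisjoint_residueCopy (s + 1) B)
  rw [card_range] at hmatching
  omega

theorem shifted_avoids_arithmetic_set (m k s : ℕ) (hk : 1 ≤ k)
    (F : Finset (Finset ℕ)) (hF : F ⊆ (Finset.Icc 1 m).powersetCard k)
    (hinit : IsInitial m F) (hnu : matchingNumber F ≤ s) :
    (Finset.Icc 1 k).image (fun i => i * (s + 1)) ∉ F := fun hB =>
  have ⟨_, hx, hlt⟩ := shifted_avoids_arithmetic_set_general hinit hnu hB
    (mem_powersetCard.1 (hF hB)).1 ((nonempty_Icc.2 hk).image _)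
  hlt.not_ge (count_add_one_mul_le_of_mem_image_mul hx)
end

section
/- Let k ≥ 2 and let F be an initial (shifted) family of k-element subsets of [m] such that ν(∂F) ≤ s, where ∂F is the immediate shadow of F. Then for every F ∈ F there exists an integer i with 1 ≤ i < k such that |F ∩ [i(s+1) − 1]| ≥ i + 1. -/
open Finset

/-!
If the theorem fails for `A = {a₁ < ⋯ < aₖ}`, then `a_{i+1} ≥ i (s + 1)` for every `1 ≤ i < k`. Let
`Hⱼ` be the set of the first `k - 1` positive integers congruent to `j` modulo `s + 1`. The `i`-th
element of `Hⱼ` is at most `i (s + 1) ≤ a_{i+1}`, so adjoining to `Hⱼ` the least element of `A` not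
in it gives a set that equals `A` or precedes it in the shifting order, and `Hⱼ` lies in the shadow.
The `s + 1` sets `Hⱼ` are pairwise disjoint, a matching that is too large.
-/

section CountingOrder

variable {α : Type*} [LinearOrder α] {A B : Finset α} {k : ℕ}

lemma orderEmbOfFin_le_of_card_filter_le (hA : #A = k) (hB : #B = k)
    (hle : ∀ n, #{x ∈ B | x ≤ n} ≤ #{x ∈ A | x ≤ n}) (i : Fin k) :
    A.orderEmbOfFin hA i ≤ B.orderEmbOfFin hB i := by
  by_contra! hlt
  have hA_lt : {x ∈ A | x ≤ B.orderEmbOfFin hB i} ⊆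
      (Iio i).map (A.orderEmbOfFin hA).toEmbedding := by
    intro x hx
    obtain ⟨hxA, hxi⟩ := mem_filter.1 hx
    rw [← map_orderEmbOfFin_univ A hA] at hxA
    obtain ⟨j, -, rfl⟩ := mem_map.1 hxA
    exact mem_map_of_mem _ (mem_Iio.2 ((A.orderEmbOfFin hA).lt_iff_lt.1 (hxi.trans_lt hlt)))
  have hB_le : (Iic i).map (B.orderEmbOfFin hB).toEmbedding ⊆
      {x ∈ B | x ≤ B.orderEmbOfFin hB i} := by
    intro x hx
    obtain ⟨j, hj, rfl⟩ := mem_map.1 hx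
    exact mem_filter.2 ⟨orderEmbOfFin_mem B hB j, (B.orderEmbOfFin hB).monotone (mem_Iic.1 hj)⟩
  have hA_card := card_le_card hA_lt
  have hB_card := card_le_card hB_le
  rw [card_map, Fin.card_Iio] at hA_card
  rw [card_map, Fin.card_Iic] at hB_card
  have := hle (B.orderEmbOfFin hB i)
  omega

lemma forall₂_sort_le_of_card_filter_le (hcard : #A = #B)
    (hle : ∀ n, #{x ∈ B | x ≤ n} ≤ #{x ∈ A | x ≤ n}) :
    List.Forall₂ (· ≤ ·) (A.sort (· ≤ ·)) (B.sort (· ≤ ·)) := by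
  refine List.forall₂_iff_get.2 ⟨by simpa using hcard, fun i _ hi ↦ ?_⟩
  exact orderEmbOfFin_le_of_card_filter_le hcard rfl hle ⟨i, by simpa using hi⟩

end CountingOrder

section Initial

variable {m : ℕ} {F : Finset (Finset ℕ)} {A B : Finset ℕ}

lemma IsInitial.mem_of_card_filter_le (hF : IsInitial m F) (hB : B ∈ F) (hA : A ⊆ Icc 1 m)
    (hcard : #A = #B) (hle : ∀ n, #{x ∈ B | x ≤ n} ≤ #{x ∈ A | x ≤ n}) : A ∈ F := by
  obtain rfl | hne := eq_or_ne A B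
  · exact hB
  · exact hF A B hA ⟨hne, forall₂_sort_le_of_card_filter_le hcard hle⟩ hB

lemma IsInitial.mem_shadow_of_card_filter_le (hF : IsInitial m F) (hA : A ∈ F)
    (hAm : A ⊆ Icc 1 m) (hBm : B ⊆ Icc 1 m) (hcard : #B + 1 = #A)
    (hle : ∀ n, #{x ∈ A | x ≤ n} ≤ #{x ∈ B | x ≤ n} + 1) : B ∈ shadow F := by
  have hne : (A \ B).Nonempty := sdiff_nonempty_of_card_lt_card (by omega)
  obtain ⟨hxA, hxB⟩ := mem_sdiff.1 (min'_mem (A \ B) hne)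
  have hmin : ∀ y ∈ A, y < (A \ B).min' hne → y ∈ B := by
    intro y hyA hy
    by_contra hyB
    exact (min'_le _ y (mem_sdiff.2 ⟨hyA, hyB⟩)).not_gt hy
  generalize (A \ B).min' hne = x at hxA hxB hmin
  refine mem_shadow_iff_insert_mem.2 ⟨x, hxB, ?_⟩
  refine hF.mem_of_card_filter_le hA (insert_subset (hAm hxA) hBm)
    (by rw [card_insert_of_notMem hxB, hcard]) fun n ↦ ?_
  obtain hxn | hnx := le_or_gt x n
  · rw [filter_insert, if_pos hxn, card_insert_of_notMem (by simp [hxB])]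
    exact hle n
  · refine card_le_card fun y hy ↦ ?_
    obtain ⟨hyA, hyn⟩ := mem_filter.1 hy
    exact mem_filter.2 ⟨mem_insert_of_mem (hmin y hyA (hyn.trans_lt hnx)), hyn⟩

end Initial

lemma card_le_matchingNumber_s14 {ι : Type*} {t : Finset ι} {f : ι → Finset ℕ}
    {F : Finset (Finset ℕ)} (hmem : ∀ i ∈ t, f i ∈ F) (hne : ∀ i ∈ t, (f i).Nonempty)
    (hdisj : (t : Set ι).PairwiseDisjoint f) : #t ≤ matchingNumber F := by
  have hinj : Set.InjOn f t := fun i hi j hj hij ↦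
    hdisj.elim hi hj (by simpa [Function.onFun, ← hij] using (hne i hi).ne_empty)
  refine le_csSup ⟨#F, ?_⟩ ⟨t.image f, image_subset_iff.2 hmem, ?_, card_image_of_injOn hinj⟩
  · rintro _ ⟨M, hM, -, rfl⟩
    exact card_le_card hM
  · rw [coe_image]
    exact hinj.pairwise_image.2 hdisj

/-- The residue class of `v` modulo `d`, restricted to the first `n` blocks of length `d` in the
positive integers. For `d = s + 1` and `n = k - 1` these are the members of the matching. -/
def residueClass (d v n : ℕ) : Finset ℕ := {x ∈ Ioc 0 (n * d) | x ≡ v [MOD d]}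

section ResidueClass

variable {d v n : ℕ}

lemma mem_residueClass {x : ℕ} :
    x ∈ residueClass d v n ↔ (0 < x ∧ x ≤ n * d) ∧ x ≡ v [MOD d] := by
  simp only [residueClass, mem_filter, mem_Ioc]

lemma card_residueClass (hd : 0 < d) : #(residueClass d v n) = n := by
  have hd' : (d : ℚ) ≠ 0 := by positivity
  have hcount := Nat.Ioc_filter_modEq_card 0 (n * d) hd v
  have hshift : ((n * d : ℕ) - v : ℚ) / d = ((0 : ℕ) - v : ℚ) / d + n := by
    push_cast
    field_simp
    ring
  rw [hshift, Int.floor_add_natCast] at hcount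
  simpa [residueClass] using hcount

lemma pairwiseDisjoint_residueClass :
    (range d : Set ℕ).PairwiseDisjoint (residueClass d · n) := by
  intro v hv w hw hne
  refine disjoint_left.2 fun x hxv hxw ↦ hne ?_
  exact ((mem_residueClass.1 hxv).2.symm.trans (mem_residueClass.1 hxw).2).eq_of_lt_of_lt
    (mem_range.1 hv) (mem_range.1 hw)

lemma le_card_filter_residueClass {i b : ℕ} (hd : 0 < d) (hin : i ≤ n) (hib : i * d ≤ b) :
    i ≤ #{x ∈ residueClass d v n | x ≤ b} := by
  calc i = #(residueClass d v i) := (card_residueClass hd).symm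
    _ ≤ #{x ∈ residueClass d v n | x ≤ b} := card_le_card fun x hx ↦ by
      obtain ⟨⟨hx0, hxi⟩, hxv⟩ := mem_residueClass.1 hx
      have hxn : x ≤ n * d := hxi.trans (Nat.mul_le_mul_right d hin)
      exact mem_filter.2 ⟨mem_residueClass.2 ⟨⟨hx0, hxn⟩, hxv⟩, hxi.trans hib⟩

end ResidueClass

/-- If `A = {a₁ < ⋯ < aₖ}`, then `hsparse` says that `a_{i+1} ≥ i d` for `1 ≤ i < k`; the truncated
subtraction makes it vacuous for `b < a₂`. -/
lemma IsInitial.residueClass_mem_shadow {m d : ℕ} {F : Finset (Finset ℕ)} {A : Finset ℕ}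
    (hF : IsInitial m F) (hA : A ∈ F) (hAm : A ⊆ Icc 1 m) (hne : A.Nonempty) (hd : 0 < d)
    (hsparse : ∀ b, (#{x ∈ A | x ≤ b} - 1) * d ≤ b) (v : ℕ) :
    residueClass d v (#A - 1) ∈ shadow F := by
  have hm : (#A - 1) * d ≤ m := by
    have hAfilter : {x ∈ A | x ≤ m} = A := filter_true_of_mem fun x hx ↦ (mem_Icc.1 (hAm hx)).2
    simpa only [hAfilter] using hsparse m
  refine hF.mem_shadow_of_card_filter_le hA hAm (fun x hx ↦ ?_) ?_ fun b ↦ ?_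
  · obtain ⟨⟨hx0, hxm⟩, -⟩ := mem_residueClass.1 hx
    exact mem_Icc.2 ⟨hx0, hxm.trans hm⟩
  · rw [card_residueClass hd, Nat.sub_add_cancel hne.card_pos]
  · exact Nat.sub_le_iff_le_add.1 <| le_card_filter_residueClass hd
      (Nat.sub_le_sub_right (card_filter_le A _) 1) (hsparse b)

lemma card_filter_le_sub_one_mul_le {A : Finset ℕ} {d : ℕ} (hpos : ∀ x ∈ A, 0 < x)
    (hsparse : ∀ i, 1 ≤ i → i < #A → #(A ∩ Icc 1 (i * d - 1)) ≤ i) (b : ℕ) :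
    (#{x ∈ A | x ≤ b} - 1) * d ≤ b := by
  by_contra! hlt
  have hcard := card_filter_le A (· ≤ b)
  have hi : 1 ≤ #{x ∈ A | x ≤ b} - 1 := Nat.pos_of_ne_zero fun h ↦ by simp [h] at hlt
  have hsub : {x ∈ A | x ≤ b} ⊆ A ∩ Icc 1 ((#{x ∈ A | x ≤ b} - 1) * d - 1) := fun x hx ↦ by
    obtain ⟨hxA, hxb⟩ := mem_filter.1 hx
    exact mem_inter.2 ⟨hxA, mem_Icc.2 ⟨hpos x hxA, by omega⟩⟩
  have hle := (card_le_card hsub).trans (hsparse _ hi (by omega))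
  omega

theorem shifted_shadow_intersection_lower_bound_general {m s : ℕ} {F : Finset (Finset ℕ)}
    (hinit : IsInitial m F) (hnu : matchingNumber (shadow F) ≤ s) {A : Finset ℕ} (hA : A ∈ F)
    (hAm : A ⊆ Icc 1 m) (hcard : 2 ≤ #A) :
    ∃ i : ℕ, 1 ≤ i ∧ i < #A ∧ i + 1 ≤ #(A ∩ Icc 1 (i * (s + 1) - 1)) := by
  by_contra! hfail
  have hsparse := card_filter_le_sub_one_mul_le (fun x hx ↦ (mem_Icc.1 (hAm hx)).1)
    fun i hi hiA ↦ Nat.le_of_lt_succ (hfail i hi hiA)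
  have hmem : ∀ v ∈ range (s + 1), residueClass (s + 1) v (#A - 1) ∈ shadow F := fun v _ ↦
    hinit.residueClass_mem_shadow hA hAm (card_pos.1 (by omega)) s.succ_pos hsparse v
  have hne : ∀ v ∈ range (s + 1), (residueClass (s + 1) v (#A - 1)).Nonempty := fun v _ ↦
    card_pos.1 (by rw [card_residueClass s.succ_pos]; omega)
  have hmatching := card_le_matchingNumber_s14 hmem hne pairwiseDisjoint_residueClass
  rw [card_range] at hmatching
  exact (hmatching.trans hnu).not_gt s.lt_succ_self

theorem shifted_shadow_intersection_lower_bound (m k s : ℕ) (hk : 2 ≤ k)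
    (F : Finset (Finset ℕ)) (hF : F ⊆ (Finset.Icc 1 m).powersetCard k)
    (hinit : IsInitial m F) (hnu : matchingNumber (Finset.shadow F) ≤ s) :
    ∀ A ∈ F, ∃ i : ℕ, 1 ≤ i ∧ i < k ∧
      i + 1 ≤ (A ∩ Finset.Icc 1 (i * (s + 1) - 1)).card := by
  intro A hA
  obtain ⟨hAm, rfl⟩ := mem_powersetCard.1 (hF hA)
  exact shifted_shadow_intersection_lower_bound_general hinit hnu hA hAm hk
end
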